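/- Let f: ℝ^{n×n} → ℝ be real analytic. Then every Q ∈ O(n) satisfies a Łojasiewicz inequality for the projected gradient: there exist δ > 0, σ > 0 and ζ ∈ (0, 1/2] such that for all Q' ∈ O(n) with ‖Q' − Q‖ < δ, it holds that |f(Q') − f(Q)|^{1−ζ} ≤ σ ‖ProjGrad f(Q')‖. -/

import Mathlib

open Matrix BigOperators Filter

/-- Frobenius norm of a real matrix. -/
noncomputable def frobR {n : ℕ} (A : Matrix (Fin n) (Fin n) ℝ) : ℝ :=
  Real.sqrt (∑ i, ∑ j, (A i j) ^ 2)

/-- `g` is the Euclidean gradient of `f : ℝ^{n×n} → ℝ`: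
the derivative of `f` at `Q` in direction `H` equals `⟨g Q, H⟩ = ∑ᵢⱼ (g Q)ᵢⱼ Hᵢⱼ`. -/
def IsGradR {n : ℕ} (f : Matrix (Fin n) (Fin n) ℝ → ℝ)
    (g : Matrix (Fin n) (Fin n) ℝ → Matrix (Fin n) (Fin n) ℝ) : Prop :=
  ∀ Q H, HasDerivAt (fun t : ℝ => f (Q + t • H)) (∑ i, ∑ j, g Q i j * H i j) 0

/-- Riemannian (projected) gradient on O(n): `Q (Λ - Λᵀ)/2` with `Λ = Qᵀ ∇f(Q)`. -/
noncomputable def projGradR {n : ℕ}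
    (g : Matrix (Fin n) (Fin n) ℝ → Matrix (Fin n) (Fin n) ℝ)
    (Q : Matrix (Fin n) (Fin n) ℝ) : Matrix (Fin n) (Fin n) ℝ :=
  Q * ((1 / 2 : ℝ) • (Qᵀ * g Q - (Qᵀ * g Q)ᵀ))

section LojA
open Topology Set

lemma loj_dom {E : Type*} [NormedAddCommGroup E] [NormedSpace ℝ E] {g h : E → ℝ} {p : E}
    (hg : AnalyticAt ℝ g p) (hh : AnalyticAt ℝ h p)
    (H : ∀ᶠ x in 𝓝 p, g x * h x = 0) :
    (∀ᶠ x in 𝓝 p, g x = 0) ∨ (∀ᶠ x in 𝓝 p, h x = 0) := by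
  by_contra hcon
  push Not at hcon
  obtain ⟨h1, h2⟩ := hcon
  obtain ⟨r, hr, hball⟩ := Metric.eventually_nhds_iff_ball.1
    ((hg.eventually_analyticAt.and hh.eventually_analyticAt).and H)
  obtain ⟨q, hq1, hq2⟩ := (h1.and_eventually (Metric.ball_mem_nhds p hr)).exists
  have hq0 : ∀ᶠ x in 𝓝 q, h x = 0 := by
    have c : ∀ᶠ x in 𝓝 q, g x ≠ 0 :=
      ((hball q hq2).1.1.continuousAt).eventually_ne hq1
    filter_upwards [c, Metric.isOpen_ball.mem_nhds hq2] with x hx hx2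
    exact (mul_eq_zero.1 (hball x hx2).2).resolve_left hx
  have := AnalyticOnNhd.eqOn_zero_of_preconnected_of_eventuallyEq_zero (𝕜 := ℝ)
    (f := h) (U := Metric.ball p r) (fun x hx => (hball x hx).1.2)
    (convex_ball p r).isPreconnected hq2 hq0
  apply h2
  filter_upwards [Metric.ball_mem_nhds p hr] with x hx
  simpa using this hx

lemma loj_direction {E : Type*} [NormedAddCommGroup E] [NormedSpace ℝ E] {f : E → ℝ}
    (hf : AnalyticAt ℝ f 0) (h : ¬ ∀ᶠ x in 𝓝 0, f x = 0) :
    ∃ v : E, ¬ ∀ᶠ t : ℝ in 𝓝 0, f (t • v) = 0 := by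
  by_contra hcon
  push Not at hcon
  apply h
  obtain ⟨r, hr, hball⟩ := Metric.eventually_nhds_iff_ball.1 hf.eventually_analyticAt
  filter_upwards [Metric.ball_mem_nhds (0:E) hr] with v hv
  have hU : IsPreconnected (Icc (0:ℝ) 1) := isPreconnected_Icc
  have := AnalyticOnNhd.eqOn_zero_of_preconnected_of_eventuallyEq_zero (𝕜 := ℝ)
    (f := fun t : ℝ => f (t • v)) (U := Icc (0:ℝ) 1) ?_ hU (z₀ := 0) (by simp) (hcon v)
  · simpa using this (x := 1) (by simp)
  · intro t ht
    have h1 : AnalyticAt ℝ f (t • v) := by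
      apply hball
      simp only [Metric.mem_ball, dist_zero_right, norm_smul, Real.norm_eq_abs] at hv ⊢
      rw [abs_of_nonneg ht.1]
      nlinarith [ht.2, norm_nonneg v]
    exact AnalyticAt.fun_comp (f := fun t : ℝ => t • v) h1 (by fun_prop)

lemma loj_integral {E : Type*} [NormedAddCommGroup E] [NormedSpace ℝ E] {h : E → ℝ}
    (hh : AnalyticAt ℝ h 0) (L : ℝ → E →L[ℝ] E) (hL : Continuous L)
    (hn : ∀ s ∈ Icc (0:ℝ) 1, ‖L s‖ ≤ 1) :
    AnalyticAt ℝ (fun x => ∫ s in (0:ℝ)..1, h (L s x)) 0 := by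
  obtain ⟨p, r, hp⟩ := hh
  let C : ∀ n : ℕ, ℝ → ContinuousMultilinearMap ℝ (fun _ : Fin n => E) ℝ :=
    fun n s => (p n).compContinuousLinearMap (fun _ => L s)
  have hC : ∀ n, Continuous (C n) := fun n =>
    (ContinuousMultilinearMap.compContinuousLinearMapLRight (p n)).cont.comp
      (continuous_pi fun _ => hL)
  have hCn : ∀ n, ∀ s ∈ Icc (0:ℝ) 1, ‖C n s‖ ≤ ‖p n‖ := by
    intro n s hs
    refine (ContinuousMultilinearMap.norm_compContinuousLinearMap_le _ _).trans ?_
    refine mul_le_of_le_one_right (norm_nonneg _) ?_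
    exact Finset.prod_le_one (fun _ _ => norm_nonneg _) (fun _ _ => hn s hs)
  have hI : uIoc (0:ℝ) 1 ⊆ Icc 0 1 := by
    rw [uIoc_of_le zero_le_one]; exact Ioc_subset_Icc_self
  let q : FormalMultilinearSeries ℝ E ℝ := fun n => ∫ s in (0:ℝ)..1, C n s
  have hq : ∀ n, ‖q n‖ ≤ ‖p n‖ := by
    intro n
    have := intervalIntegral.norm_integral_le_of_norm_le_const (a := (0:ℝ)) (b := 1)
      (f := C n) (C := ‖p n‖) (fun s hs => hCn n s (hI hs))
    simpa using this
  refine ⟨q, r, ⟨hp.r_le.trans (FormalMultilinearSeries.radius_le_of_le hq), hp.r_pos, ?_⟩⟩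
  intro y hy
  have e : ∀ n, (q n fun _ => y) = ∫ s in (0:ℝ)..1, (C n s fun _ => y) := by
    intro n
    exact (ContinuousLinearMap.intervalIntegral_comp_comm
      (ContinuousMultilinearMap.apply ℝ (fun _ : Fin n => E) ℝ (fun _ => y))
      ((hC n).intervalIntegrable 0 1)).symm
  simp only [e, zero_add]
  have hyr : y ∈ Metric.eball (0:E) p.radius := Metric.eball_subset_eball hp.r_le hy
  have hsum : Summable fun n => ‖p n‖ * ‖y‖ ^ n := by
    have := p.summable_norm_mul_pow (r := ‖y‖₊) (by simpa [enorm] using hyr)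
    simpa using this
  refine intervalIntegral.hasSum_integral_of_dominated_convergence
    (fun n _ => ‖p n‖ * ‖y‖ ^ n) ?_ ?_ ?_ ?_ ?_
  · intro n
    refine Continuous.aestronglyMeasurable ?_
    exact (ContinuousMultilinearMap.apply ℝ (fun _ : Fin n => E) ℝ (fun _ => y)).continuous.comp
      (hC n)
  · intro n
    filter_upwards with s hs
    refine ((C n s).le_opNorm _).trans ?_
    simp only [Finset.prod_const, Finset.card_univ, Fintype.card_fin]
    gcongr
    exact hCn n s (hI hs)
  · filter_upwards with s hs using hsum
  · simp
  · filter_upwards with s hs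
    have h1 : L s y ∈ Metric.eball (0:E) r := by
      have : ‖L s y‖ ≤ ‖y‖ := ((L s).le_opNorm y).trans
        (mul_le_of_le_one_left (norm_nonneg _) (hn s (hI hs)))
      simp only [Metric.mem_eball, edist_zero_right] at hy ⊢
      refine lt_of_le_of_lt ?_ hy
      exact enorm_le_iff_norm_le.2 this
    have := hp.hasSum h1
    simpa [C, zero_add] using this

/-- the scaling of the i-th coordinate -/
noncomputable def lojScale {n : ℕ} (i : Fin n) (s : ℝ) : (Fin n → ℝ) →L[ℝ] (Fin n → ℝ) :=
  ContinuousLinearMap.pi (fun j => (if j = i then s else 1) • ContinuousLinearMap.proj j)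

lemma lojScale_apply {n : ℕ} (i : Fin n) (s : ℝ) (x : Fin n → ℝ) :
    lojScale i s x = Function.update x i (s * x i) := by
  ext j
  by_cases h : j = i
  · subst h; simp [lojScale]
  · simp [lojScale, h]

lemma lojScale_norm {n : ℕ} (i : Fin n) (s : ℝ) (hs : s ∈ Icc (0:ℝ) 1) :
    ‖lojScale i s‖ ≤ 1 := by
  refine ContinuousLinearMap.opNorm_le_bound _ zero_le_one fun x => ?_
  rw [one_mul, lojScale_apply, pi_norm_le_iff_of_nonneg (norm_nonneg _)]
  intro j
  by_cases h : j = i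
  · subst h
    simp only [Function.update_self, norm_mul, Real.norm_eq_abs, abs_of_nonneg hs.1]
    have := norm_le_pi_norm x j
    simp only [Real.norm_eq_abs] at this
    nlinarith [hs.2, abs_nonneg (x j), norm_nonneg x]
  · simpa [h] using norm_le_pi_norm x j

lemma lojScale_cont {n : ℕ} (i : Fin n) : Continuous (lojScale i) := by
  have : lojScale i = fun s : ℝ => lojScale i 0 + s • (lojScale i 1 - lojScale i 0) := by
    ext s x j
    simp only [_root_.add_apply, _root_.smul_apply,
      _root_.sub_apply, lojScale_apply, Pi.add_apply, Pi.smul_apply, Pi.sub_apply]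
    by_cases h : j = i
    · subst h; simp
    · simp [h]
  rw [this]; fun_prop

lemma loj_div {n : ℕ} (i : Fin n) {f : (Fin n → ℝ) → ℝ} (hf : AnalyticAt ℝ f 0) :
    ∃ g : (Fin n → ℝ) → ℝ, AnalyticAt ℝ g 0 ∧
      ∀ᶠ x in 𝓝 0, f x = f (Function.update x i 0) + x i * g x := by
  let h : (Fin n → ℝ) → ℝ := fun x => fderiv ℝ f x (Pi.single i 1)
  have hh : AnalyticAt ℝ h 0 := ((ContinuousLinearMap.apply ℝ ℝ (Pi.single i 1 : Fin n → ℝ)).analyticAt _).comp hf.fderiv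
  refine ⟨_, loj_integral hh (lojScale i) (lojScale_cont i) (lojScale_norm i), ?_⟩
  obtain ⟨r, hr, hball⟩ := Metric.eventually_nhds_iff_ball.1 hf.eventually_analyticAt
  filter_upwards [Metric.ball_mem_nhds (0:Fin n → ℝ) hr] with x hx
  have key : ∀ s ∈ Icc (0:ℝ) 1, lojScale i s x ∈ Metric.ball 0 r := by
    intro s hs
    have := ((lojScale i s).le_opNorm x).trans
        (mul_le_of_le_one_left (norm_nonneg _) (lojScale_norm i s hs))
    simp only [Metric.mem_ball, dist_zero_right] at hx ⊢
    linarith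
  have hx' : ∀ s, lojScale i s x = Function.update x i 0 + s • (x i • Pi.single i 1) := by
    intro s; ext j
    rw [lojScale_apply]
    by_cases h : j = i
    · subst h; simp
    · simp [h]
  have hd : ∀ s ∈ Icc (0:ℝ) 1, HasDerivAt (fun s => f (lojScale i s x))
      (x i * h (lojScale i s x)) s := by
    intro s hs
    have h1 := (hball _ (key s hs)).differentiableAt.hasFDerivAt
    have h2 : HasDerivAt (fun s => lojScale i s x) (x i • Pi.single i 1) s := by
      simp only [hx']
      simpa using ((hasDerivAt_id s).smul_const (x i • (Pi.single i 1 : Fin n → ℝ))).const_add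
        (Function.update x i 0)
    have := h1.comp_hasDerivAt s h2
    simp only [map_smul, smul_eq_mul] at this
    exact this
  have hcont : ContinuousOn (fun s => x i * h (lojScale i s x)) (uIcc 0 1) := by
    rw [uIcc_of_le zero_le_one]
    intro s hs
    have a1 : ContinuousAt h (lojScale i s x) :=
      (((ContinuousLinearMap.apply ℝ ℝ (Pi.single i 1 : Fin n → ℝ)).analyticAt _).comp
        (hball _ (key s hs)).fderiv).continuousAt
    have a2 : Continuous (fun s => lojScale i s x) := (lojScale_cont i).clm_apply continuous_const
    exact (continuousAt_const.mul
      (ContinuousAt.comp (f := fun s => lojScale i s x) a1 a2.continuousAt)).continuousWithinAt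
  have := intervalIntegral.integral_eq_sub_of_hasDerivAt (a := 0) (b := 1)
    (f := fun s => f (lojScale i s x)) (f' := fun s => x i * h (lojScale i s x))
    (by rw [uIcc_of_le zero_le_one]; exact hd) (hcont.intervalIntegrable)
  rw [intervalIntegral.integral_const_mul] at this
  rw [this]
  simp [lojScale_apply]

end LojA
section LojB
open Topology Set

/-- monomials -/
noncomputable def lojMon {n : ℕ} (α : Fin n → ℕ) (x : Fin n → ℝ) : ℝ := ∏ i, x i ^ α i

/-- `f` is near `0` a monomial times a non-vanishing analytic function -/
def LojNC {n : ℕ} (f : (Fin n → ℝ) → ℝ) : Prop :=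
  ∃ (α : Fin n → ℕ) (u : (Fin n → ℝ) → ℝ), AnalyticAt ℝ u 0 ∧ u 0 ≠ 0 ∧
    ∀ᶠ x in 𝓝 0, f x = lojMon α x * u x

lemma lojMon_analytic {n : ℕ} (α : Fin n → ℕ) (p : Fin n → ℝ) : AnalyticAt ℝ (lojMon α) p := by
  unfold lojMon
  refine Finset.analyticAt_fun_prod _ fun i _ => ?_
  exact ((ContinuousLinearMap.proj (R := ℝ) (φ := fun _ : Fin n => ℝ) i).analyticAt p).fun_pow _

lemma lojMon_add {n : ℕ} (α β : Fin n → ℕ) (x : Fin n → ℝ) :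
    lojMon (α + β) x = lojMon α x * lojMon β x := by
  simp [lojMon, pow_add, Finset.prod_mul_distrib]

lemma lojMon_zero {n : ℕ} (x : Fin n → ℝ) : lojMon 0 x = 1 := by simp [lojMon]

lemma lojMon_smul {n : ℕ} (k : ℕ) (α : Fin n → ℕ) (x : Fin n → ℝ) :
    lojMon (k • α) x = lojMon α x ^ k := by
  simp [lojMon, Finset.prod_pow, pow_mul']

lemma lojMon_single {n : ℕ} (i : Fin n) (x : Fin n → ℝ) : lojMon (Pi.single i 1) x = x i := by
  classical
  unfold lojMon
  rw [Finset.prod_eq_single i]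
  · simp
  · intro j _ h; simp [h]
  · simp

lemma LojNC.congr {n : ℕ} {f g : (Fin n → ℝ) → ℝ} (hf : LojNC f)
    (h : ∀ᶠ x in 𝓝 0, g x = f x) : LojNC g := by
  obtain ⟨α, u, hu, hu0, he⟩ := hf
  exact ⟨α, u, hu, hu0, by filter_upwards [h, he] with x h1 h2; rw [h1, h2]⟩

lemma LojNC.analyticAt {n : ℕ} {f : (Fin n → ℝ) → ℝ} (hf : LojNC f) : AnalyticAt ℝ f 0 := by
  obtain ⟨α, u, hu, hu0, he⟩ := hf
  exact ((lojMon_analytic α 0).fun_mul hu).congr (by filter_upwards [he] with x h; rw [h])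

lemma LojNC.unit {n : ℕ} {f : (Fin n → ℝ) → ℝ} (hf : AnalyticAt ℝ f 0) (h : f 0 ≠ 0) :
    LojNC f := ⟨0, f, hf, h, by simp [lojMon_zero]⟩

lemma LojNC.mon {n : ℕ} (α : Fin n → ℕ) : LojNC (lojMon α) :=
  ⟨α, fun _ => 1, analyticAt_const, one_ne_zero, by simp⟩

lemma LojNC.coord {n : ℕ} (i : Fin n) : LojNC (fun x : Fin n → ℝ => x i) :=
  (LojNC.mon (Pi.single i 1)).congr (by simp [lojMon_single])

lemma LojNC.mul {n : ℕ} {f g : (Fin n → ℝ) → ℝ} (hf : LojNC f) (hg : LojNC g) :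
    LojNC (fun x => f x * g x) := by
  obtain ⟨α, u, hu, hu0, he⟩ := hf
  obtain ⟨β, v, hv, hv0, he'⟩ := hg
  refine ⟨α + β, fun x => u x * v x, hu.fun_mul hv, mul_ne_zero hu0 hv0, ?_⟩
  filter_upwards [he, he'] with x h1 h2
  rw [h1, h2, lojMon_add]; ring

lemma LojNC.pow {n : ℕ} {f : (Fin n → ℝ) → ℝ} (hf : LojNC f) (k : ℕ) :
    LojNC (fun x => f x ^ k) := by
  obtain ⟨α, u, hu, hu0, he⟩ := hf
  refine ⟨k • α, fun x => u x ^ k, hu.fun_pow k, pow_ne_zero k hu0, ?_⟩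
  filter_upwards [he] with x h1
  rw [h1, lojMon_smul]; ring

lemma LojNC.prod {n : ℕ} {ι : Type*} (s : Finset ι) {f : ι → (Fin n → ℝ) → ℝ}
    (hf : ∀ i ∈ s, LojNC (f i)) : LojNC (fun x => ∏ i ∈ s, f i x) := by
  classical
  induction s using Finset.induction_on with
  | empty => simpa using LojNC.unit (n := n) (f := fun _ => 1) analyticAt_const one_ne_zero
  | insert a s ha ih =>
    simp only [Finset.prod_insert ha]
    exact (hf a (by simp)).mul (ih fun i hi => hf i (by simp [hi]))

lemma LojNC.comp {n k : ℕ} {f : (Fin n → ℝ) → ℝ} {φ : (Fin k → ℝ) → (Fin n → ℝ)}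
    (hf : LojNC f) (hφ : AnalyticAt ℝ φ 0) (h0 : φ 0 = 0) (hc : ∀ i, LojNC (fun z => φ z i)) :
    LojNC (fun z => f (φ z)) := by
  obtain ⟨α, u, hu, hu0, he⟩ := hf
  have h1 : LojNC (fun z => (∏ i, (φ z i) ^ α i) * u (φ z)) := by
    refine (LojNC.prod _ fun i _ => (hc i).pow _).mul (LojNC.unit ?_ ?_)
    · exact AnalyticAt.fun_comp (by rwa [h0]) hφ
    · simpa [h0] using hu0
  refine h1.congr ?_
  have : Tendsto φ (𝓝 0) (𝓝 0) := by simpa [h0] using hφ.continuousAt.tendsto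
  filter_upwards [this.eventually he] with x hx
  rw [hx, lojMon]

lemma loj_tendsto_curve {n : ℕ} (s : Fin n → ℕ) (hs : ∀ i, s i ≠ 0) :
    Tendsto (fun t : ℝ => (fun i => t ^ s i : Fin n → ℝ)) (𝓝[>] 0) (𝓝 0) := by
  have : Tendsto (fun t : ℝ => (fun i => t ^ s i : Fin n → ℝ)) (𝓝 0) (𝓝 0) := by
    rw [tendsto_pi_nhds]
    intro i
    have : Continuous fun t : ℝ => t ^ s i := by fun_prop
    simpa [hs i] using this.tendsto 0
  exact this.mono_left nhdsWithin_le_nhds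

lemma lojMon_curve {n : ℕ} (s α : Fin n → ℕ) (t : ℝ) :
    lojMon α (fun i => t ^ s i) = t ^ (∑ i, s i * α i) := by
  simp [lojMon, ← pow_mul, Finset.prod_pow_eq_pow_sum]

lemma LojNC.not_zero {n : ℕ} {f : (Fin n → ℝ) → ℝ} (hf : LojNC f) :
    ¬ ∀ᶠ x in 𝓝 0, f x = 0 := by
  obtain ⟨α, u, hu, hu0, he⟩ := hf
  intro h
  have h2 := hu.continuousAt.eventually_ne hu0
  have h3 := (loj_tendsto_curve (n := n) (fun _ => 1) (by simp)).eventually (he.and (h.and h2))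
  obtain ⟨t, ⟨h4, h5, h6⟩, h7⟩ := (h3.and self_mem_nhdsWithin).exists
  rw [h5, lojMon_curve] at h4
  have : t ≠ 0 := ne_of_gt h7
  exact (mul_ne_zero (pow_ne_zero _ this) h6) h4.symm

lemma loj_cancel_coord {n : ℕ} (i : Fin n) {a b : (Fin n → ℝ) → ℝ} (ha : AnalyticAt ℝ a 0)
    (hb : AnalyticAt ℝ b 0) (h : ∀ᶠ x in 𝓝 0, x i * a x = x i * b x) :
    ∀ᶠ x in 𝓝 0, a x = b x := by
  have := loj_dom (g := fun x : Fin n → ℝ => x i) (h := fun x => a x - b x) (p := 0)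
    (LojNC.coord i).analyticAt (ha.fun_sub hb)
    (by filter_upwards [h] with x hx; rw [mul_sub, hx, sub_self])
  rcases this with h1 | h1
  · exact absurd h1 (LojNC.coord i).not_zero
  · filter_upwards [h1] with x hx; linarith

lemma loj_update_tendsto {n : ℕ} (i : Fin n) :
    Tendsto (fun x : Fin n → ℝ => Function.update x i 0) (𝓝 0) (𝓝 0) := by
  have : Continuous (fun x : Fin n → ℝ => Function.update x i (0:ℝ)) := by fun_prop
  simpa using this.tendsto 0

lemma loj_update_analytic {n : ℕ} (i : Fin n) {f : (Fin n → ℝ) → ℝ} (hf : AnalyticAt ℝ f 0) :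
    AnalyticAt ℝ (fun x => f (Function.update x i 0)) 0 := by
  have h : (fun x => f (Function.update x i 0)) = fun x => f (lojScale i 0 x) := by
    ext x; simp [lojScale_apply]
  rw [h]
  exact AnalyticAt.fun_comp (by simpa using hf) ((lojScale i 0).analyticAt 0)

lemma loj_factor_aux {n : ℕ} (k : ℕ) : ∀ (α : Fin n → ℕ), ∑ i, α i = k →
    ∀ g h u : (Fin n → ℝ) → ℝ, AnalyticAt ℝ g 0 → AnalyticAt ℝ h 0 → AnalyticAt ℝ u 0 → u 0 ≠ 0 →
    (∀ᶠ x in 𝓝 0, g x * h x = lojMon α x * u x) → LojNC g := by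
  induction k with
  | zero =>
    intro α hα g h u hg hh hu hu0 he
    have : α = 0 := by
      ext i; exact (Finset.sum_eq_zero_iff.1 hα) i (by simp)
    subst this
    have := he.self_of_nhds
    rw [lojMon_zero, one_mul] at this
    exact LojNC.unit hg (left_ne_zero_of_mul (this ▸ hu0))
  | succ k ih =>
    intro α hα g h u hg hh hu hu0 he
    obtain ⟨i, hi⟩ : ∃ i, α i ≠ 0 := by
      by_contra hc; push Not at hc; simp [hc] at hα
    obtain ⟨α', rfl⟩ : ∃ α' : Fin n → ℕ, α = Pi.single i 1 + α' := by
      refine ⟨fun j => α j - (Pi.single i 1 : Fin n → ℕ) j, ?_⟩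
      ext j
      by_cases hj : j = i
      · subst hj; simp; omega
      · simp [hj]
    have hα' : ∑ j, α' j = k := by
      simp [Finset.sum_add_distrib] at hα; omega
    have he2 : ∀ᶠ x in 𝓝 0, g x * h x = x i * (lojMon α' x * u x) := by
      filter_upwards [he] with x hx
      rw [hx, lojMon_add, lojMon_single]; ring
    have hmu : AnalyticAt ℝ (fun x => lojMon α' x * u x) 0 := (lojMon_analytic α' 0).fun_mul hu
    rcases loj_dom (loj_update_analytic i hg) (loj_update_analytic i hh)
      (by filter_upwards [(loj_update_tendsto i).eventually he2] with x hx
          rw [hx]; simp) with h1 | h1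
    · obtain ⟨g1, hg1, e1⟩ := loj_div i hg
      have e2 : ∀ᶠ x in 𝓝 0, g x = x i * g1 x := by
        filter_upwards [h1, e1] with x a b; rw [b, a, zero_add]
      have e3 := loj_cancel_coord i (hg1.fun_mul hh) hmu
        (by filter_upwards [e2, he2] with x a b; rw [← b, a]; ring)
      exact ((LojNC.coord i).mul (ih α' hα' g1 h u hg1 hh hu hu0 e3)).congr e2
    · obtain ⟨g1, hg1, e1⟩ := loj_div i hh
      have e2 : ∀ᶠ x in 𝓝 0, h x = x i * g1 x := by
        filter_upwards [h1, e1] with x a b; rw [b, a, zero_add]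
      have e3 := loj_cancel_coord i (hg.fun_mul hg1) hmu
        (by filter_upwards [e2, he2] with x a b; rw [← b, a]; ring)
      exact ih α' hα' g g1 u hg hg1 hu hu0 e3

lemma LojNC.of_mul_left {n : ℕ} {g h : (Fin n → ℝ) → ℝ} (hg : AnalyticAt ℝ g 0)
    (hh : AnalyticAt ℝ h 0) (H : LojNC fun x => g x * h x) : LojNC g := by
  obtain ⟨α, u, hu, hu0, he⟩ := H
  exact loj_factor_aux _ α rfl g h u hg hh hu hu0 he

lemma LojNC.of_prod {n : ℕ} {ι : Type*} (s : Finset ι) {f : ι → (Fin n → ℝ) → ℝ}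
    (hf : ∀ i ∈ s, AnalyticAt ℝ (f i) 0) (H : LojNC fun x => ∏ i ∈ s, f i x) :
    ∀ i ∈ s, LojNC (f i) := by
  classical
  intro i hi
  refine LojNC.of_mul_left (h := fun x => ∏ j ∈ s.erase i, f j x) (hf i hi)
    (Finset.analyticAt_fun_prod _ fun j hj => hf j (Finset.mem_of_mem_erase hj)) ?_
  refine H.congr (Eventually.of_forall fun x => ?_)
  exact Finset.mul_prod_erase s (fun j => f j x) hi

lemma loj_pow_cmp {A G : ℕ} {p q : ℝ → ℝ} {p0 q0 : ℝ} (hp : Tendsto p (𝓝[>] 0) (𝓝 p0))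
    (hq : Tendsto q (𝓝[>] 0) (𝓝 q0)) (hp0 : p0 ≠ 0)
    (h : ∀ᶠ t in 𝓝[>] (0:ℝ), t ^ A * p t = t ^ G * q t) : G ≤ A := by
  by_contra hlt
  push Not at hlt
  obtain ⟨k, rfl⟩ := Nat.exists_eq_add_of_lt hlt
  have h1 : ∀ᶠ t in 𝓝[>] (0:ℝ), t ^ (k + 1) * q t = p t := by
    filter_upwards [h, self_mem_nhdsWithin] with t ht ht0
    have : t ^ A ≠ 0 := pow_ne_zero _ (ne_of_gt ht0)
    apply mul_left_cancel₀ this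
    rw [ht]; ring
  have h2 : Tendsto (fun t : ℝ => t ^ (k + 1) * q t) (𝓝[>] 0) (𝓝 (0 ^ (k + 1) * q0)) := by
    refine Tendsto.mul ?_ hq
    exact ((continuous_pow (k + 1)).tendsto (0:ℝ)).mono_left nhdsWithin_le_nhds
  have := tendsto_nhds_unique (h2.congr' h1) hp
  simp at this
  exact hp0 this.symm

lemma loj_cmp_aux {n : ℕ} {α β γ : Fin n → ℕ} {u v w : (Fin n → ℝ) → ℝ}
    (hu : ContinuousAt u 0) (hv : ContinuousAt v 0) (hw : ContinuousAt w 0)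
    (hu0 : u 0 ≠ 0) (hw0 : w 0 ≠ 0)
    (h : ∀ᶠ x in 𝓝 0, lojMon α x * u x - lojMon β x * v x = lojMon γ x * w x)
    {i : Fin n} (hi : α i < β i) : γ = α := by
  have key : ∀ s : Fin n → ℕ, (∀ k, s k ≠ 0) → ∑ k, s k * α k < ∑ k, s k * β k →
      ∑ k, s k * γ k = ∑ k, s k * α k := by
    intro s hs hlt
    have hc := loj_tendsto_curve s hs
    obtain ⟨k, hk⟩ := Nat.exists_eq_add_of_lt hlt
    set c : ℝ → Fin n → ℝ := fun t => (fun i => t ^ s i : Fin n → ℝ)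
    have hp : Tendsto (fun t => u (c t) - t ^ (k + 1) * v (c t)) (𝓝[>] 0) (𝓝 (u 0)) := by
      have h1 := hu.tendsto.comp hc
      have h2 := hv.tendsto.comp hc
      have h3 : Tendsto (fun t : ℝ => t ^ (k + 1)) (𝓝[>] 0) (𝓝 (0 ^ (k + 1))) :=
        ((continuous_pow (k + 1)).tendsto (0:ℝ)).mono_left nhdsWithin_le_nhds
      simpa using h1.sub (h3.mul h2)
    have hq := hw.tendsto.comp hc
    have he : ∀ᶠ t in 𝓝[>] (0:ℝ), t ^ (∑ k, s k * α k) * (u (c t) - t ^ (k + 1) * v (c t))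
        = t ^ (∑ k, s k * γ k) * (w ∘ c) t := by
      filter_upwards [hc.eventually h] with t ht
      simp only [c, lojMon_curve, hk] at ht
      simp only [c, Function.comp, ← ht]
      ring
    exact le_antisymm (loj_pow_cmp hp hq hu0 he)
      (loj_pow_cmp hq hp hw0 (he.mono fun t ht => ht.symm))
  set N := 2 * ∑ k, α k + 1 with hN
  have e1 : ∀ δ : Fin n → ℕ, ∑ k, (1 + N * (Pi.single i 1 : Fin n → ℕ) k) * δ k
      = ∑ k, δ k + N * δ i := by
    intro δ
    simp [add_mul, Finset.sum_add_distrib, Pi.single_apply]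
  have e2 : ∀ (l : Fin n) (δ : Fin n → ℕ),
      ∑ k, (1 + N * (Pi.single i 1 : Fin n → ℕ) k + (Pi.single l 1 : Fin n → ℕ) k) * δ k
      = ∑ k, δ k + N * δ i + δ l := by
    intro l δ
    simp [add_mul, Finset.sum_add_distrib, Pi.single_apply]
  have hb : N * α i + N ≤ N * β i := by
    have := Nat.mul_le_mul_left N (Nat.succ_le_of_lt hi)
    rwa [Nat.mul_succ] at this
  have hle : ∀ l, α l ≤ ∑ k, α k := fun l => Finset.single_le_sum (f := α) (by simp) (by simp)
  have k1 := key (fun k => 1 + N * (Pi.single i 1 : Fin n → ℕ) k) (by intro k; simp)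
    (by rw [e1, e1]; have := hle i; omega)
  rw [e1, e1] at k1
  ext l
  have k2 := key (fun k => 1 + N * (Pi.single i 1 : Fin n → ℕ) k + (Pi.single l 1 : Fin n → ℕ) k)
    (by intro k; simp) (by rw [e2, e2]; have := hle l; omega)
  rw [e2, e2] at k2
  omega

lemma loj_cmp {n : ℕ} {α β : Fin n → ℕ} {u v : (Fin n → ℝ) → ℝ}
    (hu : ContinuousAt u 0) (hv : ContinuousAt v 0) (hu0 : u 0 ≠ 0) (hv0 : v 0 ≠ 0)
    (h : LojNC fun x => lojMon α x * u x - lojMon β x * v x) : α ≤ β ∨ β ≤ α := by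
  obtain ⟨γ, w, hw, hw0, he⟩ := h
  by_contra hc
  push Not at hc
  obtain ⟨h1, h2⟩ := hc
  simp only [Pi.le_def, not_forall, not_le] at h1 h2
  obtain ⟨j, hj⟩ := h1
  obtain ⟨i, hi⟩ := h2
  have a := loj_cmp_aux hu hv hw.continuousAt hu0 hw0 he hi
  have b := loj_cmp_aux (w := fun x => - w x) hv hu hw.continuousAt.neg hv0 (neg_ne_zero.2 hw0)
    (by filter_upwards [he] with x hx; linarith) hj
  rw [← a, ← b] at hi
  omega

end LojB
section LojC
open Topology Set

lemma loj_coord_analytic {n : ℕ} (i : Fin n) (p : Fin n → ℝ) :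
    AnalyticAt ℝ (fun x : Fin n → ℝ => x i) p :=
  (ContinuousLinearMap.proj (R := ℝ) (φ := fun _ : Fin n => ℝ) i).analyticAt p

/-- first coordinate and the rest -/
def lojCons {n : ℕ} (t : ℝ) (x : Fin n → ℝ) : Fin (n + 1) → ℝ := Fin.cons t x

def lojTl {n : ℕ} (z : Fin (n + 1) → ℝ) : Fin n → ℝ := fun i => z i.succ

@[simp] lemma lojCons_zero {n : ℕ} (t : ℝ) (x : Fin n → ℝ) : lojCons t x 0 = t := rfl
@[simp] lemma lojCons_succ {n : ℕ} (t : ℝ) (x : Fin n → ℝ) (i : Fin n) :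
    lojCons t x i.succ = x i := rfl
@[simp] lemma lojTl_cons {n : ℕ} (t : ℝ) (x : Fin n → ℝ) : lojTl (lojCons t x) = x := rfl
lemma lojTl_apply {n : ℕ} (z : Fin (n + 1) → ℝ) (i : Fin n) : lojTl z i = z i.succ := rfl
@[simp] lemma lojCons_tl {n : ℕ} (z : Fin (n + 1) → ℝ) : lojCons (z 0) (lojTl z) = z := by
  ext i; refine Fin.cases ?_ (fun i => ?_) i <;> rfl
@[simp] lemma lojTl_zero {n : ℕ} : lojTl (0 : Fin (n + 1) → ℝ) = 0 := rfl
@[simp] lemma lojCons_zero_zero {n : ℕ} : lojCons 0 (0 : Fin n → ℝ) = 0 := by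
  ext i; refine Fin.cases ?_ (fun i => ?_) i <;> rfl

lemma lojTl_analytic {n : ℕ} (p : Fin (n + 1) → ℝ) : AnalyticAt ℝ (lojTl (n := n)) p :=
  AnalyticAt.pi fun i => loj_coord_analytic i.succ p

lemma lojCons_analytic {n : ℕ} {E : Type*} [NormedAddCommGroup E] [NormedSpace ℝ E] {p : E}
    {a : E → ℝ} {b : E → Fin n → ℝ} (ha : AnalyticAt ℝ a p) (hb : AnalyticAt ℝ b p) :
    AnalyticAt ℝ (fun z => lojCons (a z) (b z)) p := by
  refine AnalyticAt.pi fun i => ?_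
  refine Fin.cases ?_ (fun i => ?_) i
  · exact ha
  · exact analyticAt_pi_iff.1 hb i

lemma lojTl_tendsto {n : ℕ} : Tendsto (lojTl (n := n)) (𝓝 0) (𝓝 0) := by
  simpa using (lojTl_analytic (n := n) 0).continuousAt.tendsto

lemma lojCons0_analytic {n : ℕ} (p : Fin n → ℝ) :
    AnalyticAt ℝ (fun x : Fin n → ℝ => lojCons 0 x) p :=
  lojCons_analytic analyticAt_const analyticAt_id

lemma lojCons0_tendsto {n : ℕ} : Tendsto (fun x : Fin n → ℝ => lojCons 0 x) (𝓝 0) (𝓝 0) := by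
  simpa using (lojCons0_analytic (n := n) 0).continuousAt.tendsto

lemma lojCons_tendsto {n : ℕ} {Ω : Type*} {l : Filter Ω} {a : Ω → ℝ} {b : Ω → Fin n → ℝ}
    (ha : Tendsto a l (𝓝 0)) (hb : Tendsto b l (𝓝 0)) :
    Tendsto (fun ω => lojCons (a ω) (b ω)) l (𝓝 0) := by
  rw [tendsto_pi_nhds]
  intro i
  refine Fin.cases ?_ (fun i => ?_) i
  · exact ha
  · exact (tendsto_pi_nhds.1 hb) i

/-- derivative in the first coordinate direction -/
noncomputable def lojD {n : ℕ} (g : (Fin (n + 1) → ℝ) → ℝ) : (Fin (n + 1) → ℝ) → ℝ :=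
  fun z => fderiv ℝ g z (Pi.single 0 1)

lemma lojD_analytic {n : ℕ} {g : (Fin (n + 1) → ℝ) → ℝ} {p} (hg : AnalyticAt ℝ g p) :
    AnalyticAt ℝ (lojD g) p :=
  ((ContinuousLinearMap.apply ℝ ℝ (Pi.single 0 1 : Fin (n + 1) → ℝ)).analyticAt _).comp hg.fderiv

lemma lojDk_analytic {n : ℕ} {g : (Fin (n + 1) → ℝ) → ℝ} {p} (hg : AnalyticAt ℝ g p) (k : ℕ) :
    AnalyticAt ℝ (lojD^[k] g) p := by
  induction k with
  | zero => exact hg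
  | succ k ih => rw [Function.iterate_succ_apply']; exact lojD_analytic ih

lemma lojD_congr {n : ℕ} {g h : (Fin (n + 1) → ℝ) → ℝ} {p} (H : g =ᶠ[𝓝 p] h) :
    lojD g =ᶠ[𝓝 p] lojD h := by
  filter_upwards [eventually_eventually_nhds.2 H] with z hz
  unfold lojD
  rw [Filter.EventuallyEq.fderiv_eq hz]

lemma lojDk_congr {n : ℕ} {g h : (Fin (n + 1) → ℝ) → ℝ} {p} (H : g =ᶠ[𝓝 p] h) (k : ℕ) :
    lojD^[k] g =ᶠ[𝓝 p] lojD^[k] h := by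
  induction k with
  | zero => exact H
  | succ k ih => rw [Function.iterate_succ_apply', Function.iterate_succ_apply']; exact lojD_congr ih

lemma lojD_mul0 {n : ℕ} {g : (Fin (n + 1) → ℝ) → ℝ} {z} (hg : AnalyticAt ℝ g z) :
    lojD (fun z => z 0 * g z) z = g z + z 0 * lojD g z := by
  have h1 : HasFDerivAt (fun z : Fin (n + 1) → ℝ => z 0)
    (ContinuousLinearMap.proj (R := ℝ) (φ := fun _ : Fin (n + 1) => ℝ) 0) z :=
    (ContinuousLinearMap.proj (R := ℝ) (φ := fun _ : Fin (n + 1) => ℝ) 0).hasFDerivAt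
  have := h1.fun_mul hg.differentiableAt.hasFDerivAt
  unfold lojD
  rw [this.fderiv]
  simp
  ring

lemma lojD_div_aux {n : ℕ} {f g : (Fin (n + 1) → ℝ) → ℝ} (hf : AnalyticAt ℝ f 0)
    (hg : AnalyticAt ℝ g 0)
    (h : ∀ᶠ z in 𝓝 0, f z = f (Function.update z 0 0) + z 0 * g z) (k : ℕ) :
    ∀ᶠ z in 𝓝 0, lojD^[k + 1] f z = z 0 * lojD^[k + 1] g z + (k + 1) * lojD^[k] g z := by
  induction k with
  | zero =>
    have h1 := lojD_congr (g := f) (h := fun z => f (lojScale 0 0 z) + z 0 * g z)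
      (by filter_upwards [h] with z hz; rw [lojScale_apply, hz]; simp)
    have h2 : ∀ᶠ z in 𝓝 (0 : Fin (n+1) → ℝ), AnalyticAt ℝ f (lojScale 0 0 z) := by
      have : Tendsto (lojScale (0 : Fin (n + 1)) 0) (𝓝 0) (𝓝 0) := by
        simpa using (lojScale (0 : Fin (n + 1)) 0).continuous.tendsto 0
      exact this.eventually hf.eventually_analyticAt
    filter_upwards [h1, h2, hg.eventually_analyticAt] with z e1 e2 e3
    simp only [zero_add, Function.iterate_one, Function.iterate_zero, id, Nat.cast_zero, one_mul]
    rw [e1]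
    have a1 : HasFDerivAt (fun z => f (lojScale 0 0 z))
      ((fderiv ℝ f (lojScale 0 0 z)).comp (lojScale 0 0)) z :=
      e2.differentiableAt.hasFDerivAt.comp z (lojScale 0 0).hasFDerivAt
    have a2 : DifferentiableAt ℝ (fun z => z 0 * g z) z :=
      ((loj_coord_analytic 0 z).fun_mul e3).differentiableAt
    have a3 : lojD (fun z => f (lojScale 0 0 z) + z 0 * g z) z
        = fderiv ℝ (fun z => f (lojScale 0 0 z)) z (Pi.single 0 1)
          + lojD (fun z => z 0 * g z) z := by
      unfold lojD
      rw [fderiv_fun_add a1.differentiableAt a2]; rfl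
    rw [a3, a1.fderiv, lojD_mul0 e3]
    have a4 : lojScale (0 : Fin (n + 1)) 0 (Pi.single 0 1) = 0 := by
      rw [lojScale_apply]; ext j; by_cases hj : j = 0
      · subst hj; simp
      · simp [hj]
    simp [a4]; ring
  | succ k ih =>
    have h1 := lojD_congr ih
    have g1 := lojDk_analytic hg (k + 1)
    have g2 := lojDk_analytic hg k
    filter_upwards [h1, g1.eventually_analyticAt, g2.eventually_analyticAt] with z e1 e2 e3
    rw [Function.iterate_succ_apply' lojD (k + 1) f, e1]
    have a3 : lojD (fun z => z 0 * lojD^[k + 1] g z + (k + 1) * lojD^[k] g z) z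
        = lojD (fun z => z 0 * lojD^[k + 1] g z) z + (k + 1) * lojD (lojD^[k] g) z := by
      have a2 : DifferentiableAt ℝ (fun z => z 0 * lojD^[k + 1] g z) z :=
        ((loj_coord_analytic 0 z).fun_mul e2).differentiableAt
      unfold lojD at a2 e2 e3 ⊢
      rw [fderiv_fun_add a2 (e3.differentiableAt.const_mul _),
        fderiv_const_mul e3.differentiableAt]; rfl
    rw [a3, lojD_mul0 e2, ← Function.iterate_succ_apply' lojD k g,
      ← Function.iterate_succ_apply' lojD (k + 1) g]
    push_cast; ring

lemma loj_update_cons {n : ℕ} (z : Fin (n + 1) → ℝ) :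
    Function.update z 0 0 = lojCons 0 (lojTl z) := by
  ext i; refine Fin.cases ?_ (fun i => ?_) i
  · simp
  · simp [lojTl]

lemma loj_taylor {n : ℕ} (d : ℕ) : ∀ {g : (Fin (n + 1) → ℝ) → ℝ}, AnalyticAt ℝ g 0 →
    ∃ V : (Fin (n + 1) → ℝ) → ℝ, AnalyticAt ℝ V 0 ∧ V 0 = lojD^[d] g 0 / d.factorial ∧
      ∀ᶠ z in 𝓝 0, g z = ∑ j ∈ Finset.range d,
        lojD^[j] g (lojCons 0 (lojTl z)) / j.factorial * z 0 ^ j + z 0 ^ d * V z := by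
  induction d with
  | zero => intro g hg; exact ⟨g, hg, by simp, by simp⟩
  | succ d ih =>
    intro g hg
    obtain ⟨g1, hg1, e1⟩ := loj_div 0 hg
    obtain ⟨V, hV, hV0, e2⟩ := ih hg1
    have key := fun k => lojD_div_aux hg hg1 e1 k
    refine ⟨V, hV, ?_, ?_⟩
    · rw [hV0]
      have := (key d).self_of_nhds
      rw [this, Nat.factorial_succ]
      push_cast
      simp
      have : (d:ℝ) + 1 ≠ 0 := by positivity
      have : (d.factorial : ℝ) ≠ 0 := by positivity
      field_simp
    · have k2 : ∀ᶠ z in 𝓝 (0 : Fin (n+1) → ℝ), ∀ k ∈ Finset.range d,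
          lojD^[k + 1] g (lojCons 0 (lojTl z)) = (k + 1) * lojD^[k] g1 (lojCons 0 (lojTl z)) := by
        rw [Filter.eventually_all_finset]
        intro k _
        filter_upwards [(lojCons0_tendsto.comp lojTl_tendsto).eventually (key k)] with z hz
        simpa using hz
      filter_upwards [e1, e2, k2] with z a1 a2 a3
      rw [Finset.sum_range_succ', a1, a2, loj_update_cons]
      have : ∑ k ∈ Finset.range d, lojD^[k + 1] g (lojCons 0 (lojTl z)) / (k + 1).factorial
          * z 0 ^ (k + 1) = z 0 * ∑ k ∈ Finset.range d, lojD^[k] g1 (lojCons 0 (lojTl z))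
          / k.factorial * z 0 ^ k := by
        rw [Finset.mul_sum]
        refine Finset.sum_congr rfl fun k hk => ?_
        rw [a3 k hk, Nat.factorial_succ]
        push_cast
        have : (k:ℝ) + 1 ≠ 0 := by positivity
        have : (k.factorial : ℝ) ≠ 0 := by positivity
        field_simp
        ring
      rw [this]
      simp
      ring

lemma loj_ift {n : ℕ} {h : (Fin (n + 1) → ℝ) → ℝ} (hh : AnalyticAt ℝ h 0) (h0 : h 0 = 0)
    (hD : lojD h 0 ≠ 0) : ∃ θ : (Fin n → ℝ) → ℝ, AnalyticAt ℝ θ 0 ∧ θ 0 = 0 ∧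
      ∀ᶠ x in 𝓝 0, h (lojCons (θ x) x) = 0 := by
  let F : (Fin n → ℝ) × ℝ → ℝ := fun p => h (lojCons p.2 p.1)
  have hc : AnalyticAt ℝ (fun p : (Fin n → ℝ) × ℝ => lojCons p.2 p.1) (0, 0) :=
    lojCons_analytic analyticAt_snd analyticAt_fst
  have hF : AnalyticAt ℝ F (0, 0) := AnalyticAt.fun_comp (by simpa using hh) hc
  have hFc : ContDiffAt ℝ (⊤ : WithTop ℕ∞) F (0, 0) := hF.contDiffAt
  have hcomp : ∀ t : ℝ, (fderiv ℝ F (0, 0) ∘L .inr ℝ (Fin n → ℝ) ℝ) t = t * lojD h 0 := by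
    intro t
    have h1 : HasFDerivAt h (fderiv ℝ h 0) (lojCons (0:ℝ) (0 : Fin n → ℝ)) := by
      rw [lojCons_zero_zero]; exact hh.differentiableAt.hasFDerivAt
    have h2 := hF.differentiableAt.hasFDerivAt
    have h3 : HasDerivAt (fun s : ℝ => F (0, s)) (fderiv ℝ F (0, 0) (0, 1)) 0 := by
      have : HasDerivAt (fun s : ℝ => ((0 : Fin n → ℝ), s)) (0, 1) 0 :=
        (hasDerivAt_const _ _).prodMk (hasDerivAt_id _)
      exact h2.comp_hasDerivAt (0:ℝ) this
    have h4 : HasDerivAt (fun s : ℝ => F (0, s)) (fderiv ℝ h 0 (Pi.single 0 1)) 0 := by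
      have e : (fun s : ℝ => lojCons s (0 : Fin n → ℝ)) = fun s => s • (Pi.single 0 1) := by
        ext s i; refine Fin.cases ?_ (fun i => ?_) i <;> simp
      have : HasDerivAt (fun s : ℝ => lojCons s (0 : Fin n → ℝ)) (Pi.single 0 1) 0 := by
        rw [e]
        simpa using (hasDerivAt_id (0:ℝ)).smul_const (Pi.single 0 1 : Fin (n + 1) → ℝ)
      exact h1.comp_hasDerivAt (0:ℝ) this
    have h5 := h3.unique h4
    have h6 : ((0 : Fin n → ℝ), t) = t • ((0 : Fin n → ℝ), (1:ℝ)) := by simp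
    simp only [ContinuousLinearMap.comp_apply, ContinuousLinearMap.inr_apply]
    rw [h6, map_smul, h5]; rfl
  have hinv : (fderiv ℝ F (0, 0) ∘L .inr ℝ (Fin n → ℝ) ℝ).IsInvertible := by
    refine ⟨ContinuousLinearEquiv.unitsEquivAut ℝ (Units.mk0 _ hD), ?_⟩
    ext
    rw [hcomp]
    simp
  have hne : (⊤ : WithTop ℕ∞) ≠ 0 := by simp
  refine ⟨hFc.implicitFunction hne hinv,
    (hFc.contDiffAt_implicitFunction hne hinv).analyticAt,
    hFc.implicitFunction_apply_self hne hinv, ?_⟩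
  filter_upwards [hFc.eventually_apply_implicitFunction hne hinv] with x hx
  simpa [F, h0] using hx

/-- the shift of the first coordinate -/
noncomputable def lojSh {n : ℕ} (θ : (Fin n → ℝ) → ℝ) (z : Fin (n + 1) → ℝ) : Fin (n + 1) → ℝ :=
  lojCons (z 0 + θ (lojTl z)) (lojTl z)

lemma lojSh_analytic {n : ℕ} {θ : (Fin n → ℝ) → ℝ} {z} (h : AnalyticAt ℝ θ (lojTl z)) :
    AnalyticAt ℝ (lojSh θ) z :=
  lojCons_analytic ((loj_coord_analytic 0 z).fun_add (h.fun_comp (lojTl_analytic z)))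
    (lojTl_analytic z)

lemma lojSh_zero {n : ℕ} {θ : (Fin n → ℝ) → ℝ} (h : θ 0 = 0) : lojSh θ 0 = 0 := by
  simp [lojSh, h]

lemma lojD_sh {n : ℕ} {θ : (Fin n → ℝ) → ℝ} {g : (Fin (n + 1) → ℝ) → ℝ} {z}
    (h : AnalyticAt ℝ θ (lojTl z)) (hg : AnalyticAt ℝ g (lojSh θ z)) :
    lojD (fun z => g (lojSh θ z)) z = lojD g (lojSh θ z) := by
  have e : ∀ s : ℝ, z + s • (Pi.single 0 1 : Fin (n + 1) → ℝ) = lojCons (z 0 + s) (lojTl z) := by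
    intro s; ext i; refine Fin.cases ?_ (fun i => ?_) i <;> simp [lojTl]
  have e2 : ∀ s : ℝ, lojSh θ (z + s • (Pi.single 0 1 : Fin (n + 1) → ℝ))
      = lojSh θ z + s • (Pi.single 0 1 : Fin (n + 1) → ℝ) := by
    intro s; rw [e]; ext i; refine Fin.cases ?_ (fun i => ?_) i <;> simp [lojSh]; ring
  have line : ∀ (p : Fin (n + 1) → ℝ), HasDerivAt
      (fun s : ℝ => p + s • (Pi.single 0 1 : Fin (n + 1) → ℝ)) (Pi.single 0 1) 0 := by
    intro p
    simpa using ((hasDerivAt_id (0:ℝ)).smul_const (Pi.single 0 1 : Fin (n + 1) → ℝ)).const_add p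
  have h1 : AnalyticAt ℝ (fun z => g (lojSh θ z)) z := hg.fun_comp (lojSh_analytic h)
  have d1 : HasDerivAt (fun s : ℝ => g (lojSh θ (z + s • (Pi.single 0 1 : Fin (n + 1) → ℝ))))
      (lojD (fun z => g (lojSh θ z)) z) 0 := by
    have := h1.differentiableAt.hasFDerivAt
    rw [show z = z + (0:ℝ) • (Pi.single 0 1 : Fin (n + 1) → ℝ) by simp] at this
    have := this.comp_hasDerivAt (0:ℝ) (line z)
    simpa [lojD] using! this
  have d2 : HasDerivAt (fun s : ℝ => g (lojSh θ z + s • (Pi.single 0 1 : Fin (n + 1) → ℝ)))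
      (lojD g (lojSh θ z)) 0 := by
    have := hg.differentiableAt.hasFDerivAt
    rw [show lojSh θ z = lojSh θ z + (0:ℝ) • (Pi.single 0 1 : Fin (n + 1) → ℝ) by simp] at this
    have := this.comp_hasDerivAt (0:ℝ) (line _)
    simpa [lojD] using! this
  simp only [e2] at d1
  exact d1.unique d2

lemma lojDk_sh {n : ℕ} {θ : (Fin n → ℝ) → ℝ} {g : (Fin (n + 1) → ℝ) → ℝ}
    (h : AnalyticAt ℝ θ 0) (h0 : θ 0 = 0) (hg : AnalyticAt ℝ g 0) (k : ℕ) :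
    ∀ᶠ z in 𝓝 0, lojD^[k] (fun z => g (lojSh θ z)) z = lojD^[k] g (lojSh θ z) := by
  induction k with
  | zero => simp
  | succ k ih =>
    have t : Tendsto (lojSh θ) (𝓝 0) (𝓝 0) := by
      have := (lojSh_analytic (θ := θ) (z := 0) h).continuousAt.tendsto
      rwa [lojSh_zero h0] at this
    have a := lojD_congr ih
    filter_upwards [a, lojTl_tendsto.eventually h.eventually_analyticAt,
      t.eventually (lojDk_analytic hg k).eventually_analyticAt] with z e1 e2 e3
    rw [Function.iterate_succ_apply', e1, Function.iterate_succ_apply', lojD_sh e2 e3]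

end LojC
section LojD
open Topology Set

/-- an analytic map along which the ultrafilter-point lifts -/
structure LojChart {Ω : Type*} (U : Ultrafilter Ω) {n k : ℕ} (x : Ω → Fin n → ℝ)
    (φ : (Fin k → ℝ) → (Fin n → ℝ)) (x' : Ω → Fin k → ℝ) : Prop where
  an : AnalyticAt ℝ φ 0
  zero : φ 0 = 0
  tend : Tendsto x' U (𝓝 0)
  lift : ∀ᶠ ω in (U : Filter Ω), φ (x' ω) = x ω

lemma LojChart.tendsto {Ω : Type*} {U : Ultrafilter Ω} {n k : ℕ} {x : Ω → Fin n → ℝ}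
    {φ : (Fin k → ℝ) → (Fin n → ℝ)} {x' : Ω → Fin k → ℝ} (h : LojChart U x φ x') :
    Tendsto φ (𝓝 0) (𝓝 0) := by
  have := h.an.continuousAt.tendsto
  rwa [h.zero] at this

lemma LojChart.comp {Ω : Type*} {U : Ultrafilter Ω} {n k l : ℕ} {x : Ω → Fin n → ℝ}
    {φ : (Fin k → ℝ) → (Fin n → ℝ)} {x' : Ω → Fin k → ℝ} (h : LojChart U x φ x')
    {ψ : (Fin l → ℝ) → (Fin k → ℝ)} {x'' : Ω → Fin l → ℝ} (h2 : LojChart U x' ψ x'') :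
    LojChart U x (fun z => φ (ψ z)) x'' := by
  refine ⟨AnalyticAt.fun_comp (by rw [h2.zero]; exact h.an) h2.an, by rw [h2.zero, h.zero],
    h2.tend, ?_⟩
  filter_upwards [h.lift, h2.lift] with ω a b
  rw [b, a]

def LojL {Ω : Type*} (U : Ultrafilter Ω) {n : ℕ} (x : Ω → Fin n → ℝ)
    (f : (Fin n → ℝ) → ℝ) : Prop :=
  ∃ (φ : (Fin n → ℝ) → (Fin n → ℝ)) (x' : Ω → Fin n → ℝ), LojChart U x φ x' ∧
    LojNC (fun z => f (φ z))

lemma LojL.step {Ω : Type*} {U : Ultrafilter Ω} {n : ℕ} {x x1 : Ω → Fin n → ℝ}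
    {f g : (Fin n → ℝ) → ℝ} {φ : (Fin n → ℝ) → (Fin n → ℝ)} (h : LojChart U x φ x1)
    (he : ∀ᶠ z in 𝓝 0, f (φ z) = g z) (hL : LojL U x1 g) : LojL U x f := by
  obtain ⟨ψ, x2, hc, hn⟩ := hL
  exact ⟨_, x2, h.comp hc, hn.congr (hc.tendsto.eventually he)⟩

lemma LojChart.id {Ω : Type*} {U : Ultrafilter Ω} {n : ℕ} {x : Ω → Fin n → ℝ}
    (hx : Tendsto x U (𝓝 0)) : LojChart U x (fun z => z) x :=
  ⟨analyticAt_id, rfl, hx, by simp⟩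

lemma LojL.congr {Ω : Type*} {U : Ultrafilter Ω} {n : ℕ} {x : Ω → Fin n → ℝ}
    (hx : Tendsto x U (𝓝 0)) {f g : (Fin n → ℝ) → ℝ} (he : ∀ᶠ z in 𝓝 0, f z = g z)
    (hL : LojL U x g) : LojL U x f :=
  LojL.step (LojChart.id hx) he hL

lemma LojL.of_nc {Ω : Type*} {U : Ultrafilter Ω} {n : ℕ} {x : Ω → Fin n → ℝ}
    (hx : Tendsto x U (𝓝 0)) {f : (Fin n → ℝ) → ℝ} (h : LojNC f) : LojL U x f :=
  ⟨_, _, LojChart.id hx, h⟩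

lemma loj_dich {Ω : Type*} (U : Ultrafilter Ω) (a b : Ω → ℝ) :
    (∃ c, Tendsto (fun ω => a ω / b ω) U (𝓝 c) ∧ ∀ᶠ ω in (U : Filter Ω), a ω = b ω * (a ω / b ω)) ∨
    (Tendsto (fun ω => b ω / a ω) U (𝓝 0) ∧ ∀ᶠ ω in (U : Filter Ω), a ω ≠ 0) := by
  by_cases h : ∃ C, ∀ᶠ ω in (U : Filter Ω), |a ω| ≤ C * |b ω|
  · left
    obtain ⟨C, hC⟩ := h
    have h1 : ∀ᶠ ω in (U : Filter Ω), a ω / b ω ∈ Icc (-|C|) |C| := by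
      filter_upwards [hC] with ω h
      rw [mem_Icc, ← abs_le, abs_div]
      apply div_le_of_le_mul₀ (abs_nonneg _) (abs_nonneg _)
      exact h.trans (by gcongr; exact le_abs_self _)
    obtain ⟨c, -, hc⟩ := (isCompact_Icc (a := -|C|) (b := |C|)).ultrafilter_le_nhds
      (U.map fun ω => a ω / b ω) (by
        rw [le_principal_iff]; exact h1)
    refine ⟨c, hc, ?_⟩
    filter_upwards [hC] with ω h
    by_cases hb : b ω = 0
    · rw [hb] at h ⊢; simp at h; simp [h]
    · field_simp
  · right
    push Not at h
    have h' := h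
    have ha : ∀ᶠ ω in (U : Filter Ω), a ω ≠ 0 := by
      filter_upwards [h' 0] with ω h; simpa using h
    refine ⟨?_, ha⟩
    rw [Metric.tendsto_nhds]
    intro ε hε
    filter_upwards [h' (1 / ε), ha] with ω h h2
    simp only [dist_zero_right, norm_div, Real.norm_eq_abs]
    rw [div_lt_iff₀ (abs_pos.2 h2)]
    rw [div_mul_eq_mul_div, one_mul, div_lt_iff₀ hε] at h
    linarith

lemma loj_exp_pred {n : ℕ} {α : Fin n → ℕ} {i : Fin n} (hi : α i ≠ 0) :
    ∃ β : Fin n → ℕ, α = Pi.single i 1 + β := by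
  refine ⟨α - Pi.single i 1, ?_⟩
  ext j
  by_cases h : j = i
  · subst h; simp; omega
  · simp [h]

lemma lojR {Ω : Type*} (U : Ultrafilter Ω) {n : ℕ} (k : ℕ) : ∀ (β : Fin n → ℕ), ∑ i, β i = k →
    ∀ (z : Ω → Fin (n + 1) → ℝ), Tendsto z U (𝓝 0) → (∀ᶠ ω in (U : Filter Ω), z ω 0 ≠ 0) →
    Tendsto (fun ω => lojMon β (lojTl (z ω)) / z ω 0) U (𝓝 0) →
    ∃ (φ : (Fin (n + 1) → ℝ) → (Fin (n + 1) → ℝ)) (z' : Ω → Fin (n + 1) → ℝ)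
      (ν : (Fin (n + 1) → ℝ) → ℝ), LojChart U z φ z' ∧ (∀ i, LojNC fun w => φ w i) ∧
      AnalyticAt ℝ ν 0 ∧ ∀ᶠ w in 𝓝 0, lojMon β (lojTl (φ w)) = φ w 0 * ν w := by
  induction k with
  | zero =>
    intro β hβ z hz hz0 hr
    exfalso
    have : β = 0 := by ext i; exact (Finset.sum_eq_zero_iff.1 hβ) i (Finset.mem_univ _)
    subst this
    have h1 : Tendsto (fun ω => z ω 0) U (𝓝 0) := (tendsto_pi_nhds.1 hz) 0
    have h2 := h1.mul hr
    have h3 : Tendsto (fun _ : Ω => (1 : ℝ)) U (𝓝 (0 * 0)) := by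
      refine h2.congr' ?_
      filter_upwards [hz0] with ω h
      rw [lojMon_zero]; field_simp
    simpa using tendsto_nhds_unique h3 tendsto_const_nhds
  | succ k ih =>
    intro β hβ z hz hz0 hr
    obtain ⟨i, -, hi⟩ : ∃ i ∈ Finset.univ, β i ≠ 0 := by
      by_contra hc; push Not at hc
      rw [Finset.sum_eq_zero hc] at hβ; omega
    obtain ⟨β', rfl⟩ := loj_exp_pred hi
    have hβ' : ∑ j, β' j = k := by
      simp [Finset.sum_add_distrib] at hβ; omega
    have hzc := tendsto_pi_nhds.1 hz
    have htl : Tendsto (fun ω => lojTl (z ω)) U (𝓝 0) := lojTl_tendsto.comp hz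
    rcases loj_dich U (fun ω => z ω 0) (fun ω => z ω i.succ) with ⟨c, hc, he⟩ | ⟨h0, -⟩
    · -- chart w ↦ (w_i (c + w 0), tl w)
      have hch : LojChart U z (fun w => lojCons (w i.succ * (c + w 0)) (lojTl w))
          (fun ω => lojCons (z ω 0 / z ω i.succ - c) (lojTl (z ω))) := by
        refine ⟨lojCons_analytic ((loj_coord_analytic _ _).fun_mul
          (analyticAt_const.fun_add (loj_coord_analytic _ _))) (lojTl_analytic _), by simp, ?_, ?_⟩
        · exact lojCons_tendsto (by simpa using hc.sub_const c) htl
        · filter_upwards [he] with ω h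
          ext j; refine Fin.cases ?_ (fun j => ?_) j
          · simp [lojTl]; exact h.symm
          · simp [lojTl]
      by_cases hc0 : c = 0
      · subst hc0
        have hs : ∀ᶠ ω in (U : Filter Ω), z ω i.succ ≠ 0 := by
          filter_upwards [he, hz0] with ω h h1 h2
          rw [h2] at h; simp at h; exact h1 h
        obtain ⟨φ, z', ν, H1, H2, H3, H4⟩ := ih β' hβ' _ hch.tend
          (by
            filter_upwards [hs, hz0] with ω h1 h2
            simp [h1, h2])
          (by
            refine hr.congr' ?_
            filter_upwards [hs, hz0] with ω h1 h2
            rw [lojMon_add, lojMon_single]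
            simp [lojTl]; field_simp)
        refine ⟨_, z', ν, hch.comp H1, ?_, H3, ?_⟩
        · intro j; refine Fin.cases ?_ (fun j => ?_) j
          · simpa using (H2 i.succ).mul (H2 0)
          · simpa using! H2 j.succ
        · filter_upwards [H4] with w hw
          simp [lojMon_add, lojMon_single, hw]
          simp [lojTl]; ring
      · refine ⟨_, _, fun w => lojMon β' (lojTl w) / (c + w 0), hch, ?_, ?_, ?_⟩
        · intro j; refine Fin.cases ?_ (fun j => ?_) j
          · simp only [lojCons_zero]
            refine (LojNC.coord i.succ).mul (LojNC.unit
              (analyticAt_const.fun_add (loj_coord_analytic _ _)) (by simpa using hc0))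
          · simpa using! LojNC.coord j.succ
        · refine AnalyticAt.fun_div (AnalyticAt.fun_comp (lojMon_analytic _ _) (lojTl_analytic _))
            (analyticAt_const.fun_add (loj_coord_analytic _ _)) (by simpa using hc0)
        · have : ∀ᶠ w in 𝓝 (0 : Fin (n + 1) → ℝ), c + w 0 ≠ 0 := by
            have : ContinuousAt (fun w : Fin (n + 1) → ℝ => c + w 0) 0 :=
              (analyticAt_const.fun_add (loj_coord_analytic _ _)).continuousAt
            exact this.eventually_ne (by simpa using hc0)
          filter_upwards [this] with w hw
          simp [lojMon_add, lojMon_single]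
          simp [lojTl]; field_simp
    · have hch : LojChart U z (fun w => Function.update w i.succ (w 0 * w i.succ))
          (fun ω => Function.update (z ω) i.succ (z ω i.succ / z ω 0)) := by
        refine ⟨?_, by simp, ?_, ?_⟩
        · refine AnalyticAt.pi fun j => ?_
          by_cases h : j = i.succ
          · subst h
            simp only [Function.update_self]
            exact (loj_coord_analytic _ _).fun_mul (loj_coord_analytic _ _)
          · simp only [Function.update_of_ne h]
            exact loj_coord_analytic _ _
        · rw [tendsto_pi_nhds]
          intro j
          by_cases h : j = i.succ
          · subst h
            simpa using h0
          · simp only [Function.update_of_ne h]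
            exact hzc j
        · filter_upwards [hz0] with ω h
          ext j
          by_cases hj : j = i.succ
          · subst hj
            have : (0 : Fin (n + 1)) ≠ i.succ := (Fin.succ_ne_zero i).symm
            simp [Function.update_of_ne this]; field_simp
          · simp [Function.update_of_ne hj]
      have ne : (0 : Fin (n + 1)) ≠ i.succ := (Fin.succ_ne_zero i).symm
      refine ⟨_, _, fun w => w i.succ *
        lojMon β' (lojTl (Function.update w i.succ (w 0 * w i.succ))), hch, ?_, ?_, ?_⟩
      · intro j
        by_cases h : j = i.succ
        · subst h
          simpa using (LojNC.coord 0).mul (LojNC.coord i.succ)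
        · simpa [Function.update_of_ne h] using LojNC.coord j
      · refine (loj_coord_analytic _ _).fun_mul (AnalyticAt.fun_comp (lojMon_analytic _ _)
          (AnalyticAt.fun_comp (lojTl_analytic _) hch.an))
      · filter_upwards with w
        simp [lojMon_add, lojMon_single, Function.update_of_ne ne]
        simp [lojTl]; ring

end LojD
section LojE
open Topology Set

lemma loj_poly_coeff (d : ℕ) : ∀ (p : Polynomial ℝ) (W : ℝ → ℝ) (w : ℝ),
    Tendsto W (𝓝[≠] 0) (𝓝 w) → (∀ᶠ t in 𝓝[≠] (0:ℝ), p.eval t = t ^ d * W t) →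
    ∀ k < d, p.coeff k = 0 := by
  induction d with
  | zero => intro p W w _ _ k hk; omega
  | succ d ih =>
    intro p W w hW he
    have h0 : p.coeff 0 = 0 := by
      rw [Polynomial.coeff_zero_eq_eval_zero]
      have t1 : Tendsto (fun t => p.eval t) (𝓝[≠] 0) (𝓝 (p.eval 0)) :=
        (p.continuous.tendsto 0).mono_left nhdsWithin_le_nhds
      have t2 : Tendsto (fun t : ℝ => t ^ (d + 1) * W t) (𝓝[≠] 0) (𝓝 (0 * w)) := by
        refine Tendsto.mul ?_ hW
        have : Continuous fun t : ℝ => t ^ (d + 1) := by fun_prop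
        simpa using (this.tendsto 0).mono_left nhdsWithin_le_nhds
      have := tendsto_nhds_unique (t1.congr' he) t2
      simpa using this
    obtain ⟨q, rfl⟩ := Polynomial.X_dvd_iff.2 h0
    have := ih q W w hW (by
      filter_upwards [he, self_mem_nhdsWithin] with t ht h1
      simp only [Polynomial.eval_mul, Polynomial.eval_X, pow_succ'] at ht
      rw [mul_assoc] at ht
      exact mul_left_cancel₀ h1 ht)
    intro k hk
    cases k with
    | zero => exact h0
    | succ k => rw [Polynomial.coeff_X_mul]; exact this k (by omega)

lemma loj_powsub {Ω : Type*} (U : Ultrafilter Ω) {n : ℕ} {x : Ω → Fin n → ℝ}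
    (hx : Tendsto x U (𝓝 0)) (e : ℕ) (he : e ≠ 0) : ∃ (ε : Fin n → ℝ) (x' : Ω → Fin n → ℝ),
      (∀ i, ε i ≠ 0) ∧ LojChart U x (fun w i => ε i * w i ^ e) x' := by
  have h1 : ∀ i, ∃ ε : ℝ, ε ≠ 0 ∧ ∀ᶠ ω in (U : Filter Ω), x ω i = ε * |x ω i| := by
    intro i
    rcases U.em (fun ω => 0 ≤ x ω i) with h | h
    · exact ⟨1, one_ne_zero, by filter_upwards [h] with ω h; rw [abs_of_nonneg h, one_mul]⟩
    · refine ⟨-1, by norm_num, ?_⟩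
      filter_upwards [h] with ω h
      rw [abs_of_neg (not_le.1 h)]; ring
  choose ε hε hx2 using h1
  refine ⟨ε, fun ω i => |x ω i| ^ ((e : ℝ)⁻¹), hε, ?_, ?_, ?_, ?_⟩
  · refine AnalyticAt.pi fun i => ?_
    exact analyticAt_const.fun_mul ((loj_coord_analytic _ _).fun_pow _)
  · ext i; simp [he]
  · rw [tendsto_pi_nhds]
    intro i
    have h2 := ((tendsto_pi_nhds.1 hx) i).abs
    have h3 : (0:ℝ) < (e : ℝ)⁻¹ := by positivity
    have h4 := h2.rpow_const (p := (e : ℝ)⁻¹) (Or.inr h3.le)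
    simpa [Real.zero_rpow h3.ne'] using h4
  · have := Filter.eventually_all.2 hx2
    filter_upwards [this] with ω h
    ext i
    rw [← Real.rpow_natCast, ← Real.rpow_mul (abs_nonneg _), inv_mul_cancel₀ (by exact_mod_cast he),
      Real.rpow_one]
    exact (h i).symm

lemma loj_prod_ne {n : ℕ} {ι : Type*} (s : Finset ι) {f : ι → (Fin n → ℝ) → ℝ}
    (ha : ∀ i ∈ s, AnalyticAt ℝ (f i) 0) (hf : ∀ i ∈ s, ¬ ∀ᶠ x in 𝓝 0, f i x = 0) :
    ¬ ∀ᶠ x in 𝓝 0, ∏ i ∈ s, f i x = 0 := by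
  classical
  induction s using Finset.induction_on with
  | empty =>
    simp only [Finset.prod_empty, one_ne_zero, eventually_false_iff_eq_bot]
    exact (inferInstance : (𝓝 (0 : Fin n → ℝ)).NeBot).ne
  | insert a s hs ih =>
    simp only [Finset.prod_insert hs]
    intro h
    rcases loj_dom (ha a (by simp)) (Finset.analyticAt_fun_prod s fun i hi => ha i (by simp [hi])) h
      with h | h
    · exact hf a (by simp) h
    · exact ih (fun i hi => ha i (by simp [hi])) (fun i hi => hf i (by simp [hi])) h

def LojUnif {Ω : Type*} (U : Ultrafilter Ω) (n : ℕ) : Prop :=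
  ∀ x : Ω → Fin n → ℝ, Tendsto x U (𝓝 0) → ∀ f : (Fin n → ℝ) → ℝ, AnalyticAt ℝ f 0 →
    ¬ (∀ᶠ z in 𝓝 0, f z = 0) → LojL U x f

lemma loj_cmp_eq {n : ℕ} {α β : Fin n → ℕ} {u v : (Fin n → ℝ) → ℝ}
    (hu : AnalyticAt ℝ u 0) (hv : AnalyticAt ℝ v 0) (hu0 : u 0 ≠ 0) (hv0 : v 0 ≠ 0)
    (h : ∀ᶠ x in 𝓝 0, lojMon α x * u x = lojMon β x * v x) : α ≤ β ∨ β ≤ α := by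
  refine loj_cmp (u := u) (v := fun x => - v x) hu.continuousAt hv.fun_neg.continuousAt hu0
    (neg_ne_zero.2 hv0) ?_
  refine ⟨α, fun x => 2 * u x, analyticAt_const.fun_mul hu, by simpa using hu0, ?_⟩
  filter_upwards [h] with x hx
  rw [mul_neg, ← hx]; ring

lemma loj_mon_powsub {n : ℕ} (α : Fin n → ℕ) (ε w : Fin n → ℝ) (e : ℕ) :
    lojMon α (fun i => ε i * w i ^ e) = lojMon α ε * lojMon α w ^ e := by
  simp only [lojMon, mul_pow, Finset.prod_mul_distrib, ← Finset.prod_pow]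
  congr 1
  refine Finset.prod_congr rfl fun i _ => ?_
  ring

lemma loj_prep {Ω : Type*} (U : Ultrafilter Ω) {n : ℕ} (hU : LojUnif U n) {x : Ω → Fin n → ℝ}
    (hx : Tendsto x U (𝓝 0)) {m : (Fin n → ℝ) → ℝ} (hm : AnalyticAt ℝ m 0)
    (hm0 : ¬ ∀ᶠ z in 𝓝 0, m z = 0) (d : ℕ) (J : Finset ℕ) (hJ : ∀ j ∈ J, j < d)
    (a : ℕ → (Fin n → ℝ) → ℝ) (ha : ∀ j ∈ J, AnalyticAt ℝ (a j) 0)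
    (hne : ∃ j ∈ J, ¬ ∀ᶠ z in 𝓝 0, a j z = 0) :
    ∃ (φ : (Fin n → ℝ) → (Fin n → ℝ)) (x' : Ω → Fin n → ℝ) (β : Fin n → ℕ) (i : ℕ)
      (b : ℕ → (Fin n → ℝ) → ℝ), LojChart U x φ x' ∧ LojNC (fun w => m (φ w)) ∧ i ∈ J ∧
      b i 0 ≠ 0 ∧ ∀ j ∈ J, AnalyticAt ℝ (b j) 0 ∧
        ∀ᶠ w in 𝓝 0, a j (φ w) = lojMon β w ^ (d - j) * b j w := by
  classical
  let N : ℕ → ℕ := fun j => d.factorial / (d - j)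
  have hN : ∀ j ∈ J, (d - j) * N j = d.factorial := fun j hj =>
    Nat.mul_div_cancel' (Nat.dvd_factorial (by have := hJ j hj; omega) (by omega))
  let S := J.filter (fun j => ¬ ∀ᶠ z in 𝓝 0, a j z = 0)
  have hSJ : ∀ j ∈ S, j ∈ J := fun j hj => (Finset.mem_filter.1 hj).1
  have haS : ∀ j ∈ S, AnalyticAt ℝ (a j) 0 := fun j hj => ha j (hSJ j hj)
  let Δ : ℕ × ℕ → (Fin n → ℝ) → ℝ := fun p z => a p.1 z ^ N p.1 - a p.2 z ^ N p.2
  let T := (S ×ˢ S).filter (fun p => ¬ ∀ᶠ z in 𝓝 0, Δ p z = 0)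
  have hΔ : ∀ p ∈ T, AnalyticAt ℝ (Δ p) 0 := by
    intro p hp
    have := Finset.mem_product.1 (Finset.mem_filter.1 hp).1
    exact ((haS _ this.1).fun_pow _).fun_sub ((haS _ this.2).fun_pow _)
  have anS := Finset.analyticAt_fun_prod S haS
  have anT := Finset.analyticAt_fun_prod T hΔ
  obtain ⟨φ1, x1, hc1, hP⟩ := hU x hx (fun z => m z * ((∏ j ∈ S, a j z) * ∏ p ∈ T, Δ p z))
    (hm.fun_mul (anS.fun_mul anT)) (by
      intro h
      rcases loj_dom hm (anS.fun_mul anT) h with h | h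
      · exact hm0 h
      rcases loj_dom anS anT h with h | h
      · exact loj_prod_ne S haS (fun j hj => (Finset.mem_filter.1 hj).2) h
      · exact loj_prod_ne T hΔ (fun j hj => (Finset.mem_filter.1 hj).2) h)
  have cmp : ∀ {h : (Fin n → ℝ) → ℝ}, AnalyticAt ℝ h 0 → AnalyticAt ℝ (fun z => h (φ1 z)) 0 :=
    fun hh => AnalyticAt.fun_comp (by rw [hc1.zero]; exact hh) hc1.an
  have ncm : LojNC (fun z => m (φ1 z)) := LojNC.of_mul_left (cmp hm) (cmp (anS.fun_mul anT)) hP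
  have hP2 : LojNC (fun z => ((∏ j ∈ S, a j (φ1 z)) * ∏ p ∈ T, Δ p (φ1 z))) :=
    LojNC.of_mul_left (h := fun z => m (φ1 z)) (cmp (anS.fun_mul anT)) (cmp hm)
      (hP.congr (by filter_upwards with z; ring))
  have ncS := LojNC.of_prod S (f := fun j z => a j (φ1 z)) (fun j hj => cmp (haS j hj))
    (LojNC.of_mul_left (cmp anS) (cmp anT) hP2)
  have ncT := LojNC.of_prod T (f := fun j z => Δ j (φ1 z)) (fun j hj => cmp (hΔ j hj))
    (LojNC.of_mul_left (h := fun z => ∏ j ∈ S, a j (φ1 z)) (cmp anT) (cmp anS)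
      (hP2.congr (by filter_upwards with z; ring)))
  have ncS' : ∀ j, ∃ (α : Fin n → ℕ) (u : (Fin n → ℝ) → ℝ), j ∈ S → (AnalyticAt ℝ u 0 ∧ u 0 ≠ 0 ∧
    ∀ᶠ x in 𝓝 0, a j (φ1 x) = lojMon α x * u x) := by
    intro j
    by_cases hj : j ∈ S
    · obtain ⟨α, u, h⟩ := ncS j hj
      exact ⟨α, u, fun _ => h⟩
    · exact ⟨0, 0, fun h => absurd h hj⟩
  choose α u hαu using ncS'
  have powS : ∀ j ∈ S, ∀ᶠ z in 𝓝 0, a j (φ1 z) ^ N j = lojMon (N j • α j) z * u j z ^ N j := by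
    intro j hj
    filter_upwards [(hαu j hj).2.2] with z hz
    rw [hz, lojMon_smul]; ring
  have tot : ∀ j ∈ S, ∀ k ∈ S, N j • α j ≤ N k • α k ∨ N k • α k ≤ N j • α j := by
    intro j hj k hk
    have uj := (hαu j hj).1.fun_pow (N j)
    have uk := (hαu k hk).1.fun_pow (N k)
    have uj0 := pow_ne_zero (N j) (hαu j hj).2.1
    have uk0 := pow_ne_zero (N k) (hαu k hk).2.1
    by_cases h : ∀ᶠ z in 𝓝 0, Δ (j, k) z = 0
    · refine loj_cmp_eq uj uk uj0 uk0 ?_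
      filter_upwards [powS j hj, powS k hk, hc1.tendsto.eventually h] with z h1 h2 h3
      rw [← h1, ← h2]
      simp only [Δ] at h3
      linarith
    · refine loj_cmp uj.continuousAt uk.continuousAt uj0 uk0 ?_
      refine (ncT (j, k) (Finset.mem_filter.2 ⟨Finset.mem_product.2 ⟨hj, hk⟩, h⟩)).congr ?_
      filter_upwards [powS j hj, powS k hk] with z h1 h2
      simp only [Δ]
      rw [h1, h2]
  obtain ⟨j0, hj0, hj0'⟩ := hne
  obtain ⟨i, hiS, hi⟩ := Finset.exists_minimalFor (fun j => N j • α j) S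
    ⟨j0, Finset.mem_filter.2 ⟨hj0, hj0'⟩⟩
  have hmin : ∀ j ∈ S, ∃ γ : Fin n → ℕ, N j • α j = N i • α i + γ := by
    intro j hj
    have : N i • α i ≤ N j • α j := (tot i hiS j hj).elim (fun h => h) (fun h => hi hj h)
    exact ⟨N j • α j - N i • α i, (add_tsub_cancel_of_le this).symm⟩
  obtain ⟨ε, x2, hε, hc2⟩ := loj_powsub U hc1.tend d.factorial (Nat.factorial_ne_zero d)
  have hcoord : ∀ k, LojNC (fun w : Fin n → ℝ => ε k * w k ^ d.factorial) := fun k =>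
    (LojNC.unit analyticAt_const (hε k)).mul ((LojNC.coord k).pow _)
  have hmin' : ∀ j, ∃ γ : Fin n → ℕ, j ∈ S → N j • α j = N i • α i + γ := by
    intro j
    by_cases hj : j ∈ S
    · obtain ⟨γ, h⟩ := hmin j hj
      exact ⟨γ, fun _ => h⟩
    · exact ⟨0, fun h => absurd h hj⟩
  choose γ hγ using hmin'
  have hγi : γ i = 0 := by
    have := hγ i hiS
    simpa using this.symm
  have hεα : ∀ j, lojMon (α j) ε ≠ 0 := fun j =>
    Finset.prod_ne_zero_iff.2 fun k _ => pow_ne_zero _ (hε k)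
  refine ⟨_, x2, N i • α i, i, fun j w => if j ∈ S then lojMon (α j) ε * lojMon (γ j) w ^ (d - j) *
    u j (fun k => ε k * w k ^ d.factorial) else 0, hc1.comp hc2,
    ncm.comp hc2.an hc2.zero hcoord, hSJ i hiS, ?_, ?_⟩
  · simp only [hiS, if_true, hγi, lojMon_zero, one_pow, mul_one]
    have := hc2.zero
    rw [this]
    exact mul_ne_zero (hεα i) (hαu i hiS).2.1
  · intro j hjJ
    by_cases hj : j ∈ S
    · simp only [hj, if_true]
      constructor
      · refine (analyticAt_const.fun_mul ((lojMon_analytic _ _).fun_pow _)).fun_mul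
          (AnalyticAt.fun_comp (g := u j) ?_ hc2.an)
        rw [hc2.zero]; exact (hαu j hj).1
      · filter_upwards [hc2.tendsto.eventually (hαu j hj).2.2] with w hw
        rw [hw, loj_mon_powsub, ← hN j hjJ, mul_comm (d - j), pow_mul, ← lojMon_smul, hγ j hj,
          lojMon_add]
        ring
    · simp only [hj, if_false]
      refine ⟨analyticAt_const, ?_⟩
      have : ∀ᶠ z in 𝓝 0, a j z = 0 := by
        by_contra h
        exact hj (Finset.mem_filter.2 ⟨hjJ, h⟩)
      filter_upwards [(hc1.comp hc2).tendsto.eventually this] with w hw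
      rw [hw]; simp

end LojE
section LojF
open Topology Set

lemma LojNC.tl {n : ℕ} {h : (Fin n → ℝ) → ℝ} (hh : LojNC h) :
    LojNC (fun z : Fin (n + 1) → ℝ => h (lojTl z)) :=
  hh.comp (lojTl_analytic 0) lojTl_zero fun i => LojNC.coord i.succ

lemma LojChart.cons {Ω : Type*} {U : Ultrafilter Ω} {n : ℕ} {z : Ω → Fin (n + 1) → ℝ}
    {φ : (Fin n → ℝ) → (Fin n → ℝ)} {x' : Ω → Fin n → ℝ} (hz : Tendsto z U (𝓝 0))
    (h : LojChart U (fun ω => lojTl (z ω)) φ x') :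
    LojChart U z (fun w => lojCons (w 0) (φ (lojTl w))) (fun ω => lojCons (z ω 0) (x' ω)) := by
  refine ⟨lojCons_analytic (loj_coord_analytic _ _)
    (AnalyticAt.fun_comp (by simpa using h.an) (lojTl_analytic _)), by simp [h.zero],
    lojCons_tendsto ((tendsto_pi_nhds.1 hz) 0) h.tend, ?_⟩
  filter_upwards [h.lift] with ω hω
  simp [hω]

lemma lojM_easy {Ω : Type*} {U : Ultrafilter Ω} {n : ℕ} (hU : LojUnif U n)
    {z : Ω → Fin (n + 1) → ℝ} (hz : Tendsto z U (𝓝 0)) {m : (Fin n → ℝ) → ℝ}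
    (hm : AnalyticAt ℝ m 0) (hm0 : ¬ ∀ᶠ z in 𝓝 0, m z = 0) {g V : (Fin (n + 1) → ℝ) → ℝ}
    (hV : AnalyticAt ℝ V 0) (hV0 : V 0 ≠ 0) (d : ℕ) (he : ∀ᶠ z in 𝓝 0, g z = z 0 ^ d * V z) :
    LojL U z (fun z => m (lojTl z) * g z) := by
  obtain ⟨φ1, x1, hc, hn⟩ := hU _ (lojTl_tendsto.comp hz) m hm hm0
  have hc' := hc.cons hz
  refine ⟨_, _, hc', ?_⟩
  have h1 : LojNC (fun w : Fin (n + 1) → ℝ => V (lojCons (w 0) (φ1 (lojTl w)))) := by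
    refine LojNC.unit (AnalyticAt.fun_comp ?_ hc'.an) ?_
    · rw [hc'.zero]; exact hV
    · have := hc'.zero
      rw [this]; exact hV0
  refine (hn.tl.mul (((LojNC.coord 0).pow d).mul h1)).congr ?_
  filter_upwards [hc'.tendsto.eventually he] with w hw
  rw [hw]; simp

lemma lojMon_at_zero {n : ℕ} {β : Fin n → ℕ} (h : β ≠ 0) : lojMon β (0 : Fin n → ℝ) = 0 := by
  obtain ⟨i, hi⟩ := Function.ne_iff.1 h
  exact Finset.prod_eq_zero (Finset.mem_univ i) (by simpa using hi)

/-- the transformed function has smaller order -/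
lemma loj_order_drop {n : ℕ} {g : (Fin (n + 1) → ℝ) → ℝ} (hg : AnalyticAt ℝ g 0) (d : ℕ) (hd : 1 ≤ d)
    (b : ℕ → ℝ) (c : ℝ) (V : ℝ → ℝ) (V0 : ℝ) (hV0 : V0 ≠ 0) (i : ℕ) (hi : i < d - 1) (hb : b i ≠ 0)
    (hV : ContinuousAt V 0) (hVc : c ≠ 0 → ∀ t, V t = V0)
    (he : ∀ᶠ t in 𝓝 (0:ℝ), g (lojCons t 0) =
      ∑ j ∈ Finset.range (d - 1), b j * (c + t) ^ j + (c + t) ^ d * V t) :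
    ∃ k < d, lojD^[k] g 0 ≠ 0 := by
  by_contra hcon
  push Not at hcon
  obtain ⟨W, hW, -, hWe⟩ := loj_taylor d hg
  have tc : Tendsto (fun t : ℝ => lojCons t (0 : Fin n → ℝ)) (𝓝 0) (𝓝 0) :=
    lojCons_tendsto tendsto_id tendsto_const_nhds
  have h1 : ∀ᶠ t in 𝓝 (0:ℝ), g (lojCons t 0) = t ^ d * W (lojCons t 0) := by
    filter_upwards [tc.eventually hWe] with t ht
    rw [ht, Finset.sum_eq_zero, zero_add]
    · simp
    · intro j hj
      simp [hcon j (Finset.mem_range.1 hj)]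
  have tW : Tendsto (fun t : ℝ => W (lojCons t 0)) (𝓝 0) (𝓝 (W 0)) := hW.continuousAt.tendsto.comp tc
  by_cases hc : c = 0
  · subst hc
    let p : Polynomial ℝ := ∑ j ∈ Finset.range (d - 1), Polynomial.C (b j) * Polynomial.X ^ j
    have := loj_poly_coeff d p (fun t => W (lojCons t 0) - V t) (W 0 - V 0)
      ((tW.sub hV.tendsto).mono_left nhdsWithin_le_nhds) (by
        refine Eventually.filter_mono nhdsWithin_le_nhds ?_
        filter_upwards [h1, he] with t a1 a2
        rw [a1] at a2
        simp only [p, Polynomial.eval_finsetSum, Polynomial.eval_mul, Polynomial.eval_C,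
          Polynomial.eval_pow, Polynomial.eval_X]
        simp only [zero_add] at a2
        linarith) i (by omega)
    apply hb
    simpa [p, Polynomial.finsetSum_coeff, Polynomial.coeff_X_pow, hi] using this
  · let p : Polynomial ℝ := ∑ j ∈ Finset.range (d - 1), Polynomial.C (b j) *
      (Polynomial.X + Polynomial.C c) ^ j + Polynomial.C V0 * (Polynomial.X + Polynomial.C c) ^ d
    have := loj_poly_coeff d p (fun t => W (lojCons t 0)) (W 0)
      (tW.mono_left nhdsWithin_le_nhds) (by
        refine Eventually.filter_mono nhdsWithin_le_nhds ?_
        filter_upwards [h1, he] with t a1 a2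
        rw [a1, hVc hc t] at a2
        simp only [p, Polynomial.eval_finsetSum, Polynomial.eval_mul, Polynomial.eval_C,
          Polynomial.eval_pow, Polynomial.eval_X, Polynomial.eval_add]
        rw [a2, add_comm c t]; ring) (d - 1) (by omega)
    have h2 : p.coeff (d - 1) = V0 * (c * d) := by
      simp only [p, Polynomial.coeff_add, Polynomial.finsetSum_coeff, Polynomial.coeff_C_mul,
        Polynomial.coeff_X_add_C_pow]
      rw [Finset.sum_eq_zero, zero_add]
      · obtain ⟨e, rfl⟩ : ∃ e, d = e + 1 := ⟨d - 1, by omega⟩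
        simp
      · intro j hj
        rw [Nat.choose_eq_zero_of_lt (Finset.mem_range.1 hj)]; simp
    rw [h2] at this
    have hd' : (d:ℝ) ≠ 0 := by positivity
    exact (mul_ne_zero hV0 (mul_ne_zero hc hd')) this

lemma lojM_core {Ω : Type*} {U : Ultrafilter Ω} {n : ℕ} (hU : LojUnif U n) (d : ℕ) (hd : 1 ≤ d)
    (IH : ∀ k < d, ∀ z : Ω → Fin (n + 1) → ℝ, Tendsto z U (𝓝 0) → ∀ m : (Fin n → ℝ) → ℝ,
      AnalyticAt ℝ m 0 → (¬ ∀ᶠ z in 𝓝 0, m z = 0) → ∀ g : (Fin (n + 1) → ℝ) → ℝ,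
      AnalyticAt ℝ g 0 → lojD^[k] g 0 ≠ 0 → LojL U z (fun z => m (lojTl z) * g z))
    {z : Ω → Fin (n + 1) → ℝ} (hz : Tendsto z U (𝓝 0)) {m : (Fin n → ℝ) → ℝ}
    (hm : AnalyticAt ℝ m 0) (hm0 : ¬ ∀ᶠ z in 𝓝 0, m z = 0) {g V : (Fin (n + 1) → ℝ) → ℝ}
    (hV : AnalyticAt ℝ V 0) (hV0 : V 0 ≠ 0) (a : ℕ → (Fin n → ℝ) → ℝ)
    (ha : ∀ j ∈ Finset.range (d - 1), AnalyticAt ℝ (a j) 0)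
    (he : ∀ᶠ z in 𝓝 0, g z = ∑ j ∈ Finset.range (d - 1), a j (lojTl z) * z 0 ^ j + z 0 ^ d * V z) :
    LojL U z (fun z => m (lojTl z) * g z) := by
  by_cases hall : ∃ j ∈ Finset.range (d - 1), ¬ ∀ᶠ z in 𝓝 0, a j z = 0
  swap
  · push Not at hall
    refine lojM_easy hU hz hm hm0 hV hV0 d ?_
    have := (Filter.eventually_all_finset _).2 hall
    filter_upwards [he, lojTl_tendsto.eventually this] with z h1 h2
    rw [h1, Finset.sum_eq_zero, zero_add]
    intro j hj
    rw [h2 j hj, zero_mul]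
  obtain ⟨φ, x', β, i, b, hc, hmn, hiJ, hbi, hb⟩ := loj_prep U hU (lojTl_tendsto.comp hz) hm hm0 d
    (Finset.range (d - 1)) (fun j hj => by have := Finset.mem_range.1 hj; omega) a ha hall
  have hi := Finset.mem_range.1 hiJ
  have hΦ := hc.cons hz
  let Φ : (Fin (n + 1) → ℝ) → (Fin (n + 1) → ℝ) := fun w => lojCons (w 0) (φ (lojTl w))
  have hΦ0 : Φ 0 = 0 := hΦ.zero
  have hΦt : Tendsto Φ (𝓝 0) (𝓝 0) := hΦ.tendsto
  have hVΦ : AnalyticAt ℝ (fun w => V (Φ w)) 0 :=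
    AnalyticAt.fun_comp (by rw [hΦ0]; exact hV) hΦ.an
  let z1 : Ω → Fin (n + 1) → ℝ := fun ω => lojCons (z ω 0) (x' ω)
  have hz1 : Tendsto z1 U (𝓝 0) := hΦ.tend
  let g1 : (Fin (n + 1) → ℝ) → ℝ := fun w => ∑ j ∈ Finset.range (d - 1),
    lojMon β (lojTl w) ^ (d - j) * b j (lojTl w) * w 0 ^ j + w 0 ^ d * V (Φ w)
  refine LojL.step hΦ (g := fun w => m (φ (lojTl w)) * g1 w) ?_ ?_
  · have := (Filter.eventually_all_finset _).2 (fun j hj => (hb j hj).2)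
    filter_upwards [lojTl_tendsto.eventually this, hΦt.eventually he] with w h1 h2
    simp only [Φ] at h2
    rw [h2]
    simp only [lojTl_cons, lojCons_zero, g1, Φ]
    congr 2
    refine Finset.sum_congr rfl fun j hj => ?_
    rw [h1 j hj]
  have ht0 : Tendsto (fun ω => z ω 0) U (𝓝 0) := (tendsto_pi_nhds.1 hz) 0
  rcases loj_dich U (fun ω => z ω 0) (fun ω => lojMon β (x' ω)) with ⟨c, hcl, hce⟩ | ⟨hr, hr0⟩
  · have hβc : lojMon β (0 : Fin n → ℝ) * c = 0 := by
      by_cases hβ : β = 0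
      · subst hβ
        simp only [lojMon_zero, div_one] at hcl
        rw [tendsto_nhds_unique hcl ht0, mul_zero]
      · rw [lojMon_at_zero hβ, zero_mul]
    have hΨ : LojChart U z1 (fun w => lojCons (lojMon β (lojTl w) * (c + w 0)) (lojTl w))
        (fun ω => lojCons (z ω 0 / lojMon β (x' ω) - c) (x' ω)) := by
      refine ⟨lojCons_analytic ((AnalyticAt.fun_comp (lojMon_analytic _ _) (lojTl_analytic _)).fun_mul
        (analyticAt_const.fun_add (loj_coord_analytic _ _))) (lojTl_analytic _), ?_, ?_, ?_⟩
      · simp [hβc]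
      · exact lojCons_tendsto (by simpa using hcl.sub_const c) hc.tend
      · filter_upwards [hce] with ω h
        simp only [lojTl_cons, lojCons_zero, z1]
        rw [show c + (z ω 0 / lojMon β (x' ω) - c) = z ω 0 / lojMon β (x' ω) by ring, ← h]
    let Ψ : (Fin (n + 1) → ℝ) → (Fin (n + 1) → ℝ) :=
      fun w => lojCons (lojMon β (lojTl w) * (c + w 0)) (lojTl w)
    have hΨ0 : Ψ 0 = 0 := hΨ.zero
    let g2 : (Fin (n + 1) → ℝ) → ℝ := fun w => ∑ j ∈ Finset.range (d - 1),
      b j (lojTl w) * (c + w 0) ^ j + (c + w 0) ^ d * V (Φ (Ψ w))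
    have hVΨ : AnalyticAt ℝ (fun w => V (Φ (Ψ w))) 0 :=
      AnalyticAt.fun_comp (g := fun w => V (Φ w)) (by rw [hΨ0]; exact hVΦ) hΨ.an
    have hcw : AnalyticAt ℝ (fun w : Fin (n + 1) → ℝ => c + w 0) 0 :=
      analyticAt_const.fun_add (loj_coord_analytic _ _)
    have hg2 : AnalyticAt ℝ g2 0 := by
      refine AnalyticAt.fun_add (Finset.analyticAt_fun_sum _ fun j hj => ?_) ((hcw.fun_pow _).fun_mul hVΨ)
      exact (AnalyticAt.fun_comp (by simpa using (hb j hj).1) (lojTl_analytic _)).fun_mul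
        (hcw.fun_pow _)
    obtain ⟨k, hk, hk2⟩ : ∃ k < d, lojD^[k] g2 0 ≠ 0 := by
      have tc : Tendsto (fun t : ℝ => lojCons t (0 : Fin n → ℝ)) (𝓝 0) (𝓝 0) :=
        lojCons_tendsto tendsto_id tendsto_const_nhds
      refine loj_order_drop hg2 d hd (fun j => b j 0) c (fun t => V (Φ (Ψ (lojCons t 0)))) (V 0) hV0 i hi hbi
        ?_ ?_ ?_
      · have := hVΨ.continuousAt.tendsto.comp tc
        unfold ContinuousAt
        simpa using! this
      · intro hc0 t
        have : lojMon β (0 : Fin n → ℝ) = 0 := by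
          rcases mul_eq_zero.1 hβc with h | h
          · exact h
          · exact absurd h hc0
        simp [Ψ, this, hΦ0]
      · filter_upwards with t
        simp [g2]
    refine LojL.step hΨ (g := fun w => (m (φ (lojTl w)) * lojMon β (lojTl w) ^ d) * g2 w) ?_ ?_
    · filter_upwards with w
      simp only [lojTl_cons, lojCons_zero, g1, g2]
      rw [mul_assoc]
      congr 1
      conv_rhs => rw [mul_add, Finset.mul_sum]
      congr 1
      · refine Finset.sum_congr rfl fun j hj => ?_
        have : d = (d - j) + j := by have := Finset.mem_range.1 hj; omega
        conv_rhs => rw [show lojMon β (lojTl w) ^ d = lojMon β (lojTl w) ^ (d - j)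
          * lojMon β (lojTl w) ^ j by rw [← pow_add, ← this]]
        rw [mul_pow]
        ring
      · simp only [Ψ]
        rw [mul_pow]; ring
    · have nc : LojNC (fun x => m (φ x) * lojMon β x ^ d) := hmn.mul ((LojNC.mon β).pow d)
      exact IH k hk _ hΨ.tend (fun x => m (φ x) * lojMon β x ^ d) nc.analyticAt nc.not_zero g2 hg2 hk2
  · obtain ⟨φ2, z2, ν, hc2, hcoord, hν, hνe⟩ := lojR U _ β rfl z1 hz1 hr0 hr
    have hν0 : ν 0 = 0 := by
      have t1 : Tendsto (fun ω => ν (z2 ω)) U (𝓝 (ν 0)) := hν.continuousAt.tendsto.comp hc2.tend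
      refine tendsto_nhds_unique t1 (hr.congr' ?_)
      filter_upwards [hc2.lift, hc2.tend.eventually hνe, hr0] with ω h1 h2 h3
      rw [h1] at h2
      simp only [z1, lojTl_cons, lojCons_zero] at h2
      rw [h2]; field_simp
    have hVφ : AnalyticAt ℝ (fun w => V (Φ (φ2 w))) 0 :=
      AnalyticAt.fun_comp (g := fun w => V (Φ w)) (by rw [hc2.zero]; exact hVΦ) hc2.an
    have hunit : LojNC (fun w => ∑ j ∈ Finset.range (d - 1), b j (lojTl (φ2 w)) * ν w ^ (d - j)
        + V (Φ (φ2 w))) := by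
      refine LojNC.unit (AnalyticAt.fun_add (Finset.analyticAt_fun_sum _ fun j hj => ?_) hVφ) ?_
      · refine AnalyticAt.fun_mul (AnalyticAt.fun_comp (g := b j) ?_
          (AnalyticAt.fun_comp (lojTl_analytic _) hc2.an)) (hν.fun_pow _)
        rw [hc2.zero]; simpa using (hb j hj).1
      · rw [Finset.sum_eq_zero, zero_add, hc2.zero, hΦ0]
        · exact hV0
        · intro j hj
          have : d - j ≠ 0 := by have := Finset.mem_range.1 hj; omega
          rw [hν0, zero_pow this, mul_zero]
    refine ⟨φ2, z2, hc2, ?_⟩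
    refine ((hmn.tl.comp hc2.an hc2.zero hcoord).mul (((hcoord 0).pow d).mul hunit)).congr ?_
    filter_upwards [hνe] with w hw
    simp only [g1]
    congr 1
    rw [mul_add, Finset.mul_sum]
    congr 1
    refine Finset.sum_congr rfl fun j hj => ?_
    have : d = (d - j) + j := by have := Finset.mem_range.1 hj; omega
    rw [hw, mul_pow]
    conv_rhs => rw [show φ2 w 0 ^ d = φ2 w 0 ^ (d - j) * φ2 w 0 ^ j by rw [← pow_add, ← this]]
    ring

lemma lojM {Ω : Type*} {U : Ultrafilter Ω} {n : ℕ} (hU : LojUnif U n) (d : ℕ) :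
    ∀ z : Ω → Fin (n + 1) → ℝ, Tendsto z U (𝓝 0) → ∀ m : (Fin n → ℝ) → ℝ,
      AnalyticAt ℝ m 0 → (¬ ∀ᶠ z in 𝓝 0, m z = 0) → ∀ g : (Fin (n + 1) → ℝ) → ℝ,
      AnalyticAt ℝ g 0 → lojD^[d] g 0 ≠ 0 → LojL U z (fun z => m (lojTl z) * g z) := by
  induction d using Nat.strong_induction_on with
  | _ d IH =>
  intro z hz m hm hm0 g hg hgd
  by_cases hd : d = 0
  · subst hd
    exact lojM_easy hU hz hm hm0 hg hgd 0 (by simp)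
  by_cases hp : lojD^[d - 1] g 0 = 0
  swap
  · exact IH (d - 1) (by omega) z hz m hm hm0 g hg hp
  have hd1 : d = (d - 1) + 1 := by omega
  obtain ⟨θ, hθ, hθ0, hθe⟩ := loj_ift (lojDk_analytic hg (d - 1)) hp
    (by rw [← Function.iterate_succ_apply' lojD, ← Nat.succ_eq_add_one, ] at *; rwa [hd1] at hgd)
  have htl : Tendsto (fun ω => lojTl (z ω)) U (𝓝 0) := lojTl_tendsto.comp hz
  have htθ : Tendsto (fun ω => θ (lojTl (z ω))) U (𝓝 0) := by
    have := hθ.continuousAt.tendsto.comp htl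
    rwa [hθ0] at this
  have hch : LojChart U z (lojSh θ) (fun ω => lojCons (z ω 0 - θ (lojTl (z ω))) (lojTl (z ω))) := by
    refine ⟨lojSh_analytic (by simpa using hθ), lojSh_zero hθ0,
      lojCons_tendsto (by simpa using ((tendsto_pi_nhds.1 hz) 0).sub htθ) htl, ?_⟩
    filter_upwards with ω
    simp [lojSh]
  let g' : (Fin (n + 1) → ℝ) → ℝ := fun z => g (lojSh θ z)
  have hg' : AnalyticAt ℝ g' 0 := AnalyticAt.fun_comp (by rw [hch.zero]; exact hg) hch.an
  have hD := lojDk_sh hθ hθ0 hg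
  obtain ⟨V, hV, hV0, hVe⟩ := loj_taylor d hg'
  refine LojL.step hch (g := fun z => m (lojTl z) * g' z) (by
    filter_upwards with z; simp [g', lojSh]) ?_
  refine lojM_core hU d (by omega) IH hch.tend hm hm0 hV ?_
    (fun j x => lojD^[j] g' (lojCons 0 x) / j.factorial) ?_ ?_
  · rw [hV0]
    have := (hD d).self_of_nhds
    rw [show lojD^[d] g' 0 = lojD^[d] g (lojSh θ 0) from this, lojSh_zero hθ0]
    exact div_ne_zero hgd (by positivity)
  · intro j hj
    refine AnalyticAt.fun_div (AnalyticAt.fun_comp ?_ (lojCons0_analytic _)) analyticAt_const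
      (by positivity)
    simpa using lojDk_analytic hg' j
  · have h1 : ∀ᶠ z in 𝓝 (0 : Fin (n + 1) → ℝ), lojD^[d - 1] g' (lojCons 0 (lojTl z)) = 0 := by
      filter_upwards [(lojCons0_tendsto.comp lojTl_tendsto).eventually (hD (d - 1)),
        lojTl_tendsto.eventually hθe] with z h1 h2
      simp only [Function.comp] at h1
      rw [show lojD^[d - 1] g' _ = _ from h1]
      simpa [lojSh] using h2
    filter_upwards [hVe, h1] with z h2 h3
    rw [h2]
    congr 1
    conv_lhs => rw [hd1]
    rw [Finset.sum_range_succ, h3]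
    simp

lemma loj_exists_order {n : ℕ} {g : (Fin (n + 1) → ℝ) → ℝ} (hg : AnalyticAt ℝ g 0)
    (h : ¬ ∀ᶠ t : ℝ in 𝓝 0, g (t • Pi.single 0 1) = 0) : ∃ d, lojD^[d] g 0 ≠ 0 := by
  by_contra hcon
  push Not at hcon
  apply h
  have e : ∀ t : ℝ, lojCons t (0 : Fin n → ℝ) = t • Pi.single 0 1 := by
    intro s; ext i; refine Fin.cases ?_ (fun i => ?_) i <;> simp
  have hl : AnalyticAt ℝ (fun t : ℝ => lojCons t (0 : Fin n → ℝ)) 0 :=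
    lojCons_analytic analyticAt_id analyticAt_const
  have hq : AnalyticAt ℝ (fun t : ℝ => g (lojCons t 0)) 0 :=
    AnalyticAt.fun_comp (by simpa using hg) hl
  have tc : Tendsto (fun t : ℝ => lojCons t (0 : Fin n → ℝ)) (𝓝 0) (𝓝 0) :=
    lojCons_tendsto tendsto_id tendsto_const_nhds
  simp only [← e]
  have top : analyticOrderAt (fun t : ℝ => g (lojCons t 0)) 0 = ⊤ := by
    rw [ENat.eq_top_iff_forall_ge]
    intro d
    rw [natCast_le_analyticOrderAt hq]
    obtain ⟨W, hW, -, hWe⟩ := loj_taylor d hg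
    refine ⟨fun t => W (lojCons t 0), AnalyticAt.fun_comp (by simpa using hW) hl, ?_⟩
    filter_upwards [tc.eventually hWe] with t ht
    rw [ht, Finset.sum_eq_zero, zero_add]
    · simp
    · intro j hj
      simp [hcon j]
  exact analyticOrderAt_eq_top.1 top

theorem loj_unif {Ω : Type*} (U : Ultrafilter Ω) (n : ℕ) : LojUnif U n := by
  induction n with
  | zero =>
    intro x hx f hf hne
    refine LojL.of_nc hx (LojNC.unit hf fun h => hne ?_)
    filter_upwards with z
    rw [Subsingleton.elim z 0, h]
  | succ n ih =>
    intro x hx f hf hne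
    by_cases h0 : f 0 = 0
    swap
    · exact LojL.of_nc hx (LojNC.unit hf h0)
    obtain ⟨v, hv⟩ := loj_direction hf hne
    have hv0 : v ≠ 0 := by
      rintro rfl
      exact hv (by simp [h0])
    have he0 : (Pi.single 0 1 : Fin (n + 1) → ℝ) ≠ 0 := by
      intro h; simpa using congrFun h 0
    obtain ⟨A, hA⟩ := SeparatingDual.exists_continuousLinearEquiv_apply_eq (R := ℝ) he0 hv0
    have hch : LojChart U x (fun z => A z) (fun ω => A.symm (x ω)) := by
      refine ⟨(A : (Fin (n + 1) → ℝ) →L[ℝ] (Fin (n + 1) → ℝ)).analyticAt 0, map_zero _, ?_, by simp⟩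
      have := (A.symm.continuous.tendsto 0).comp hx
      simpa using! this
    have hg : AnalyticAt ℝ (fun z => f (A z)) 0 :=
      AnalyticAt.fun_comp (by simpa using hf) hch.an
    obtain ⟨d, hd⟩ := loj_exists_order hg (by simpa [hA] using hv)
    refine LojL.step hch (g := fun z => (fun _ => (1:ℝ)) (lojTl z) * f (A z)) (by simp) ?_
    refine lojM ih d _ hch.tend _ analyticAt_const ?_ _ hg hd
    simp only [one_ne_zero, eventually_false_iff_eq_bot]
    exact (inferInstance : (𝓝 (0 : Fin n → ℝ)).NeBot).ne

end LojF
section LojG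
open Topology Set

lemma lojMon_line {n : ℕ} (α : Fin n → ℕ) (z : Fin n → ℝ) (i : Fin n) (s : ℝ) :
    lojMon α (z + s • (z i • (Pi.single i 1 : Fin n → ℝ))) = (1 + s) ^ α i * lojMon α z := by
  classical
  unfold lojMon
  rw [← Finset.mul_prod_erase _ _ (Finset.mem_univ i),
    ← Finset.mul_prod_erase (Finset.univ) (fun j => z j ^ α j) (Finset.mem_univ i), ← mul_assoc,
    ← mul_pow]
  congr 1
  · simp; ring_nf
  · refine Finset.prod_congr rfl fun j hj => ?_
    simp [Finset.ne_of_mem_erase hj]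

lemma loj_mon_grad {n : ℕ} {G : (Fin n → ℝ) → ℝ} (hG : LojNC G) (h0 : G 0 = 0) :
    ∃ t : ℕ, 1 ≤ t ∧ ∃ C > 0, ∀ᶠ z in 𝓝 0, G z ≠ 0 →
      |G z| ^ (t - 1) ≤ C * ‖fderiv ℝ G z‖ ^ t := by
  have hGa := hG.analyticAt
  obtain ⟨α, u, hu, hu0, he⟩ := hG
  have hα : α ≠ 0 := by
    rintro rfl
    have := he.self_of_nhds
    rw [h0, lojMon_zero, one_mul] at this
    exact hu0 this.symm
  have hS : (Finset.univ.filter fun i => α i ≠ 0).Nonempty := by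
    obtain ⟨i, hi⟩ := Function.ne_iff.1 hα
    exact ⟨i, by simpa using hi⟩
  set t := ∑ i, α i with ht
  have ht1 : 1 ≤ t := by
    obtain ⟨i, hi⟩ := hS
    have := Finset.single_le_sum (f := α) (fun _ _ => Nat.zero_le _) (Finset.mem_univ i)
    have h2 := (Finset.mem_filter.1 hi).2
    omega
  set c := |u 0| / 2 with hc
  have hcpos : 0 < c := by positivity
  have hub : ∀ᶠ z in 𝓝 0, |u z| < 2 * |u 0| := by
    have : Tendsto (fun z => |u z|) (𝓝 0) (𝓝 |u 0|) := hu.continuousAt.tendsto.abs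
    exact this.eventually_lt_const (by linarith [abs_pos.2 hu0])
  have hlow : ∀ᶠ z in 𝓝 0, ∀ i, α i ≠ 0 →
      c < |α i * u z + fderiv ℝ u z (z i • Pi.single i 1)| := by
    rw [Filter.eventually_all]
    intro i
    by_cases hi : α i = 0
    · simp [hi]
    · have h1 : ContinuousAt (fun z => fderiv ℝ u z (z i • Pi.single i 1)) 0 := by
        have a1 : ContinuousAt (fun z : Fin n → ℝ => z i • (Pi.single i 1 : Fin n → ℝ)) 0 :=
          ((loj_coord_analytic i 0).continuousAt).smul continuousAt_const
        exact hu.fderiv.continuousAt.clm_apply a1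
      have h2 : ContinuousAt (fun z => |α i * u z + fderiv ℝ u z (z i • Pi.single i 1)|) 0 :=
        ((continuousAt_const.mul hu.continuousAt).add h1).abs
      have h3 : c < |α i * u 0 + fderiv ℝ u 0 ((0 : Fin n → ℝ) i • Pi.single i 1)| := by
        simp only [Pi.zero_apply, zero_smul, map_zero, add_zero, abs_mul, Nat.abs_cast]
        have : (1:ℝ) ≤ α i := by exact_mod_cast Nat.one_le_iff_ne_zero.2 hi
        have := abs_pos.2 hu0
        nlinarith
      filter_upwards [h2.eventually_const_lt h3] with z hz _ using hz
  refine ⟨t, ht1, (2 * |u 0|) ^ (t - 1) / c ^ t, by positivity, ?_⟩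
  filter_upwards [he, eventually_eventually_nhds.2 he, hub, hlow, hu.eventually_analyticAt,
    hGa.eventually_analyticAt] with z e0 e1 e2 e3 e4 e5 hne
  obtain ⟨i, hi, hmin⟩ := Finset.exists_min_image _ (fun i => |z i|) hS
  have hi' := (Finset.mem_filter.1 hi).2
  set M := |lojMon α z| with hM
  have hMpos : 0 < M := by
    rw [hM, abs_pos]; intro h; rw [e0, h, zero_mul] at hne; exact hne rfl
  have hzi : 0 < |z i| := by
    rw [abs_pos]; intro h
    have : lojMon α z = 0 := Finset.prod_eq_zero (Finset.mem_univ i) (by simp [h, hi'])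
    rw [hM, this] at hMpos; simp at hMpos
  have hMz : |z i| ^ t ≤ M := by
    rw [hM, lojMon, Finset.abs_prod, ht, ← Finset.prod_pow_eq_pow_sum]
    refine Finset.prod_le_prod (fun _ _ => by positivity) fun j _ => ?_
    rw [abs_pow]
    by_cases hj : α j = 0
    · simp [hj]
    · exact pow_le_pow_left₀ (abs_nonneg _) (hmin j (by simpa using hj)) _
  have line : ∀ v : Fin n → ℝ, HasDerivAt (fun s : ℝ => z + s • v) v 0 := by
    intro v
    simpa using ((hasDerivAt_id (0:ℝ)).smul_const v).const_add z
  have fd : ∀ {h : (Fin n → ℝ) → ℝ} (v : Fin n → ℝ), AnalyticAt ℝ h z →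
      HasDerivAt (fun s : ℝ => h (z + s • v)) (fderiv ℝ h z v) 0 := by
    intro h v hh
    have := hh.differentiableAt.hasFDerivAt
    rw [show z = z + (0:ℝ) • v by simp] at this
    have := this.comp_hasDerivAt (0:ℝ) (line v)
    simpa using! this
  have key : fderiv ℝ G z (z i • Pi.single i 1) =
      lojMon α z * (α i * u z + fderiv ℝ u z (z i • Pi.single i 1)) := by
    have d1 := fd (z i • Pi.single i 1) e5
    have d2 := fd (z i • Pi.single i 1) e4
    have d3 : HasDerivAt (fun s : ℝ => (1 + s) ^ α i * lojMon α z) (α i * lojMon α z) 0 := by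
      have := (((hasDerivAt_id (0:ℝ)).const_add 1).fun_pow (α i)).mul_const (lojMon α z)
      simpa using this
    have d4 := d3.fun_mul d2
    have cont : Tendsto (fun s : ℝ => z + s • (z i • (Pi.single i 1 : Fin n → ℝ))) (𝓝 0) (𝓝 z) := by
      have := (line (z i • (Pi.single i 1 : Fin n → ℝ))).continuousAt.tendsto
      simpa using this
    have d5 := d4.congr_of_eventuallyEq (f₁ := fun s : ℝ => G (z + s • (z i • (Pi.single i 1 : Fin n → ℝ))))
      (by filter_upwards [cont.eventually e1] with s hs; rw [hs, lojMon_line])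
    rw [d1.unique d5]
    simp
    ring
  have hD : c * M ≤ |z i| * ‖fderiv ℝ G z‖ := by
    have h1 : ‖fderiv ℝ G z (z i • Pi.single i 1)‖ ≤ ‖fderiv ℝ G z‖ * |z i| := by
      refine (ContinuousLinearMap.le_opNorm _ _).trans ?_
      gcongr
      rw [norm_smul, Pi.norm_single]; simp
    rw [key, norm_mul, Real.norm_eq_abs, Real.norm_eq_abs] at h1
    have := e3 i hi'
    nlinarith
  have h3 : c ^ t * M ^ t ≤ M * ‖fderiv ℝ G z‖ ^ t := by
    calc c ^ t * M ^ t = (c * M) ^ t := by ring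
      _ ≤ (|z i| * ‖fderiv ℝ G z‖) ^ t := by gcongr
      _ = |z i| ^ t * ‖fderiv ℝ G z‖ ^ t := by ring
      _ ≤ _ := by gcongr
  have h4 : c ^ t * M ^ (t - 1) ≤ ‖fderiv ℝ G z‖ ^ t := by
    have : M ^ t = M * M ^ (t - 1) := by rw [← pow_succ']; congr 1; omega
    rw [this] at h3
    refine le_of_mul_le_mul_left ?_ hMpos
    linarith
  have h5 : |G z| ≤ 2 * |u 0| * M := by
    rw [e0, abs_mul, mul_comm]; gcongr
  calc |G z| ^ (t - 1) ≤ (2 * |u 0| * M) ^ (t - 1) := by gcongr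
    _ = (2 * |u 0|) ^ (t - 1) / c ^ t * (c ^ t * M ^ (t - 1)) := by
      rw [mul_pow]; field_simp
    _ ≤ _ := by gcongr

lemma loj_grad_fin {N : ℕ} {F : (Fin N → ℝ) → ℝ} (hF : AnalyticAt ℝ F 0) (h0 : F 0 = 0) :
    ∃ k : ℕ, 2 ≤ k ∧ ∀ᶠ x in 𝓝 0, |F x| ^ (1 - 1 / (k : ℝ)) ≤ k * ‖fderiv ℝ F x‖ := by
  by_contra hcon
  push Not at hcon
  have hex : ∀ j : ℕ, ∃ x : Fin N → ℝ, ‖x‖ < 1 / ((j : ℝ) + 1) ∧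
      ((j + 2 : ℕ) : ℝ) * ‖fderiv ℝ F x‖ < |F x| ^ (1 - 1 / ((j + 2 : ℕ) : ℝ)) := by
    intro j
    have h1 := hcon (j + 2) (by omega)
    have h2 : ∀ᶠ x in 𝓝 (0 : Fin N → ℝ), ‖x‖ < 1 / ((j : ℝ) + 1) := by
      have := Metric.ball_mem_nhds (0 : Fin N → ℝ) (ε := 1 / ((j : ℝ) + 1)) (by positivity)
      filter_upwards [this] with x hx; simpa using hx
    obtain ⟨x, hx1, hx2⟩ := (h1.and_eventually h2).exists
    exact ⟨x, hx2, hx1⟩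
  choose x hx1 hx2 using hex
  have hxt : Tendsto x atTop (𝓝 0) := by
    rw [tendsto_zero_iff_norm_tendsto_zero]
    exact squeeze_zero (fun _ => norm_nonneg _) (fun j => (hx1 j).le)
      tendsto_one_div_add_atTop_nhds_zero_nat
  have hexp : ∀ j : ℕ, (0:ℝ) < 1 - 1 / ((j + 2 : ℕ) : ℝ) := by
    intro j
    have : (1:ℝ) < ((j + 2 : ℕ) : ℝ) := by push_cast; linarith [(Nat.cast_nonneg j : (0:ℝ) ≤ j)]
    rw [sub_pos, div_lt_one (by linarith)]; exact this
  have hFx : ∀ j, F (x j) ≠ 0 := by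
    intro j h
    have := hx2 j
    rw [h, abs_zero, Real.zero_rpow (hexp j).ne'] at this
    have h3 : (0:ℝ) ≤ ((j + 2 : ℕ) : ℝ) * ‖fderiv ℝ F (x j)‖ := by positivity
    linarith
  have hne : ¬ ∀ᶠ z in 𝓝 0, F z = 0 := by
    intro h
    obtain ⟨j, hj⟩ := (hxt.eventually h).exists
    exact hFx j hj
  let U : Ultrafilter ℕ := hyperfilter ℕ
  have hUle : (U : Filter ℕ) ≤ atTop := Nat.hyperfilter_le_atTop
  have hxU : Tendsto x U (𝓝 0) := hxt.mono_left hUle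
  obtain ⟨φ, x', hc, hn⟩ := loj_unif U N x hxU F hF hne
  obtain ⟨t, ht, C, hC, hCe⟩ := loj_mon_grad hn (by rw [hc.zero, h0])
  obtain ⟨B, hB⟩ : ∃ B > 0, ∀ᶠ z in 𝓝 0, ‖fderiv ℝ φ z‖ ≤ B := by
    refine ⟨‖fderiv ℝ φ 0‖ + 1, by positivity, ?_⟩
    have : Tendsto (fun z => ‖fderiv ℝ φ z‖) (𝓝 0) (𝓝 ‖fderiv ℝ φ 0‖) :=
      hc.an.fderiv.continuousAt.tendsto.norm
    filter_upwards [this.eventually_lt_const (lt_add_one _)] with z hz using hz.le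
  obtain ⟨hBp, hB⟩ := hB
  have chain : ∀ᶠ z in 𝓝 0, ‖fderiv ℝ (fun z => F (φ z)) z‖ ≤ ‖fderiv ℝ F (φ z)‖ * B := by
    filter_upwards [hB, hc.an.eventually_analyticAt, hc.tendsto.eventually hF.eventually_analyticAt]
      with z b1 b2 b3
    have := fderiv_fun_comp z b3.differentiableAt b2.differentiableAt
    rw [this]
    refine (ContinuousLinearMap.opNorm_comp_le _ _).trans ?_
    gcongr
  have hsmall : ∀ᶠ z in 𝓝 0, |F z| ≤ 1 := by
    have : Tendsto (fun z => |F z|) (𝓝 0) (𝓝 |F 0|) := hF.continuousAt.tendsto.abs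
    filter_upwards [this.eventually_lt_const (by rw [h0]; norm_num : |F 0| < 1)] with z hz using hz.le
  have hlarge : ∀ᶠ j : ℕ in U, C * B ^ t ≤ j ∧ t ≤ j := by
    refine Eventually.filter_mono hUle ?_
    filter_upwards [tendsto_natCast_atTop_atTop.eventually_ge_atTop (C * B ^ t),
      eventually_ge_atTop t] with j h1 h2 using ⟨h1, h2⟩
  obtain ⟨j, j1, j2, j3, j4, j5, j6⟩ := (hc.lift.and ((hc.tend.eventually hCe).and
    ((hc.tend.eventually chain).and ((hxU.eventually hsmall).and hlarge)))).exists
  rw [j1] at j2 j3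
  have J2 := j2 (hFx j)
  set f := |F (x j)| with hf
  have fpos : 0 < f := abs_pos.2 (hFx j)
  set D := ‖fderiv ℝ F (x j)‖ with hD
  set k : ℝ := ((j + 2 : ℕ) : ℝ) with hk
  have hkpos : 0 < k := by positivity
  have hjk : (j : ℝ) < k := by rw [hk]; push_cast; linarith
  have hX := hx2 j
  have s1 : f ^ (t - 1) ≤ C * (D * B) ^ t := J2.trans (by gcongr)
  have s2 : k ^ t * D ^ t ≤ f ^ (t - 1) := by
    have a1 : (k * D) ^ t ≤ (f ^ (1 - 1 / k)) ^ t := by gcongr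
    have a2 : (f ^ (1 - 1 / k)) ^ t ≤ f ^ (t - 1) := by
      rw [← Real.rpow_natCast, ← Real.rpow_mul fpos.le, ← Real.rpow_natCast]
      refine Real.rpow_le_rpow_of_exponent_ge fpos j4 ?_
      rw [Nat.cast_sub ht, sub_mul, one_mul]
      have : 1 / k * t ≤ 1 := by
        rw [div_mul_eq_mul_div, one_mul, div_le_one hkpos]
        have : (t:ℝ) ≤ j := by exact_mod_cast j6
        linarith
      push_cast
      linarith
    rw [← mul_pow]; exact a1.trans a2
  have fp : 0 < f ^ (t - 1) := by positivity
  have s3 : k ≤ k ^ t := by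
    have : 1 ≤ k := by rw [hk]; push_cast; linarith [(Nat.cast_nonneg j : (0:ℝ) ≤ j)]
    exact le_self_pow₀ this (by omega)
  have s4 : k * f ^ (t - 1) ≤ C * B ^ t * f ^ (t - 1) := by
    calc k * f ^ (t - 1) ≤ k ^ t * (C * (D * B) ^ t) := by gcongr
      _ = C * B ^ t * (k ^ t * D ^ t) := by ring
      _ ≤ _ := by gcongr
  have s5 : k ≤ C * B ^ t := le_of_mul_le_mul_right s4 fp
  linarith

theorem loj_grad {E : Type*} [NormedAddCommGroup E] [NormedSpace ℝ E] [FiniteDimensional ℝ E]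
    {F : E → ℝ} {p : E} (hF : AnalyticAt ℝ F p) : ∃ k : ℕ, 2 ≤ k ∧ ∃ C > 0, ∀ᶠ x in 𝓝 p,
      |F x - F p| ^ (1 - 1 / (k : ℝ)) ≤ C * ‖fderiv ℝ F x‖ := by
  let e : (Fin (Module.finrank ℝ E) → ℝ) ≃L[ℝ] E := ContinuousLinearEquiv.ofFinrankEq (by simp)
  have hmap : AnalyticAt ℝ (fun y => p + e y) 0 := analyticAt_const.fun_add
    ((e : (Fin (Module.finrank ℝ E) → ℝ) →L[ℝ] E).analyticAt 0)
  have hG : AnalyticAt ℝ (fun y => F (p + e y) - F p) 0 :=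
    AnalyticAt.fun_sub (AnalyticAt.fun_comp (by simpa using hF) hmap) analyticAt_const
  obtain ⟨k, hk, he⟩ := loj_grad_fin hG (by simp)
  refine ⟨k, hk, k * (‖(e : (Fin (Module.finrank ℝ E) → ℝ) →L[ℝ] E)‖ + 1), by positivity, ?_⟩
  have ht : Tendsto (fun x => e.symm (x - p)) (𝓝 p) (𝓝 0) := by
    have : Continuous fun x => e.symm (x - p) := by fun_prop
    simpa using this.tendsto p
  filter_upwards [ht.eventually he, hF.eventually_analyticAt] with x h1 h2
  have hx : p + e (e.symm (x - p)) = x := by simp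
  simp only [hx] at h1
  refine h1.trans ?_
  rw [mul_assoc]
  gcongr
  have d : HasFDerivAt (fun y => F (p + e y) - F p)
      ((fderiv ℝ F x).comp (e : (Fin (Module.finrank ℝ E) → ℝ) →L[ℝ] E)) (e.symm (x - p)) := by
    have d1 : HasFDerivAt F (fderiv ℝ F x) (p + e (e.symm (x - p))) := by
      rw [hx]; exact h2.differentiableAt.hasFDerivAt
    have d2 : HasFDerivAt (fun y => p + e y) (e : (Fin (Module.finrank ℝ E) → ℝ) →L[ℝ] E)
      (e.symm (x - p)) := e.hasFDerivAt.const_add p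
    exact (HasFDerivAt.comp (f := fun y => p + e y) (e.symm (x - p)) d1 d2).sub_const _
  rw [d.fderiv]
  refine (ContinuousLinearMap.opNorm_comp_le _ _).trans ?_
  rw [mul_comm]
  gcongr
  linarith

end LojG
section LojH
open Topology Set

lemma loj_entry_le_frob {n : ℕ} (A : Matrix (Fin n) (Fin n) ℝ) (i j : Fin n) :
    |A i j| ≤ frobR A := by
  unfold frobR
  rw [← Real.sqrt_sq_eq_abs]
  apply Real.sqrt_le_sqrt
  calc A i j ^ 2 ≤ ∑ j, A i j ^ 2 :=
        Finset.single_le_sum (f := fun j => A i j ^ 2) (fun _ _ => sq_nonneg _) (Finset.mem_univ j)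
    _ ≤ _ := Finset.single_le_sum (f := fun i => ∑ j, A i j ^ 2)
        (fun _ _ => Finset.sum_nonneg fun _ _ => sq_nonneg _) (Finset.mem_univ i)

/-- polynomial map fixing the orthogonal group, with tangential derivative there -/
noncomputable def lojRet {n : ℕ} (X : Matrix (Fin n) (Fin n) ℝ) : Matrix (Fin n) (Fin n) ℝ :=
  (1 / 2 : ℝ) • ((3 : ℝ) • X - X * Xᵀ * X)

lemma lojRet_self {n : ℕ} {Q : Matrix (Fin n) (Fin n) ℝ} (hQ : Qᵀ * Q = 1) : lojRet Q = Q := by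
  unfold lojRet
  rw [mul_assoc, hQ, mul_one]
  ext i j
  simp; ring

lemma lojRet_line {n : ℕ} {Q : Matrix (Fin n) (Fin n) ℝ} (hQ : Qᵀ * Q = 1)
    (H : Matrix (Fin n) (Fin n) ℝ) : ∃ R S : Matrix (Fin n) (Fin n) ℝ, ∀ t : ℝ,
    lojRet (Q + t • H) = Q + t • ((1 / 2 : ℝ) • (H - Q * Hᵀ * Q)) + t ^ 2 • R + t ^ 3 • S := by
  have hQ' : Q * Qᵀ = 1 := mul_eq_one_comm.1 hQ
  refine ⟨-(1 / 2 : ℝ) • (H * Hᵀ * Q + H * Qᵀ * H + Q * Hᵀ * H), -(1 / 2 : ℝ) • (H * Hᵀ * H),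
    fun t => ?_⟩
  have e : (Q + t • H) * (Q + t • H)ᵀ * (Q + t • H) = Q + t • (H + Q * Hᵀ * Q + H)
      + t ^ 2 • (H * Hᵀ * Q + H * Qᵀ * H + Q * Hᵀ * H) + t ^ 3 • (H * Hᵀ * H) := by
    have a1 : H * Qᵀ * Q = H := by rw [mul_assoc, hQ, mul_one]
    have a2 : Q * Qᵀ * H = H := by rw [hQ', one_mul]
    have a3 : Q * Qᵀ * Q = Q := by rw [hQ', one_mul]
    simp only [transpose_add, transpose_smul, add_mul, mul_add, smul_mul_assoc, mul_smul_comm,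
      a1, a2, a3]
    module
  unfold lojRet
  rw [e]
  module

lemma loj_pair {n : ℕ} (A B : Matrix (Fin n) (Fin n) ℝ) :
    ∑ i, ∑ j, A i j * B i j = (A * Bᵀ).trace := by
  simp [Matrix.trace, Matrix.mul_apply]

lemma loj_pair_proj {n : ℕ} (g : Matrix (Fin n) (Fin n) ℝ → Matrix (Fin n) (Fin n) ℝ)
    {Q : Matrix (Fin n) (Fin n) ℝ} (hQ : Qᵀ * Q = 1) (H : Matrix (Fin n) (Fin n) ℝ) :
    ∑ i, ∑ j, g Q i j * ((1 / 2 : ℝ) • (H - Q * Hᵀ * Q)) i j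
      = ∑ i, ∑ j, projGradR g Q i j * H i j := by
  have hQ' : Q * Qᵀ = 1 := mul_eq_one_comm.1 hQ
  rw [loj_pair, loj_pair]
  unfold projGradR
  have e1 : Q * ((1 / 2 : ℝ) • (Qᵀ * g Q - (Qᵀ * g Q)ᵀ)) = (1 / 2 : ℝ) • (g Q - Q * (g Q)ᵀ * Q) := by
    rw [mul_smul_comm, mul_sub, ← mul_assoc, hQ', one_mul, transpose_mul, transpose_transpose,
      mul_assoc]
  rw [e1]
  simp only [transpose_smul, transpose_sub, transpose_mul, transpose_transpose, mul_smul_comm,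
    smul_mul_assoc, trace_smul, mul_sub, sub_mul, trace_sub]
  congr 2
  rw [← trace_transpose (Q * (g Q)ᵀ * Q * Hᵀ)]
  simp only [transpose_mul, transpose_transpose]
  simp only [← mul_assoc]
  rw [mul_assoc (g Q * Qᵀ) H Qᵀ, trace_mul_comm (g Q * Qᵀ) (H * Qᵀ)]
  simp only [mul_assoc]

lemma lojRet_analytic {n : ℕ} (p : Fin n → Fin n → ℝ) :
    AnalyticAt ℝ (fun x : Fin n → Fin n → ℝ => (fun i j => lojRet (Matrix.of x) i j :
      Fin n → Fin n → ℝ)) p := by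
  have c : ∀ i j, AnalyticAt ℝ (fun x : Fin n → Fin n → ℝ => x i j) p := fun i j =>
    ((ContinuousLinearMap.proj (R := ℝ) (φ := fun _ : Fin n => ℝ) j).comp
      (ContinuousLinearMap.proj (R := ℝ) (φ := fun _ : Fin n => Fin n → ℝ) i)).analyticAt p
  refine AnalyticAt.pi fun i => AnalyticAt.pi fun j => ?_
  simp only [lojRet, Matrix.smul_apply, Matrix.sub_apply, Matrix.mul_apply, Matrix.of_apply,
    Matrix.transpose_apply, smul_eq_mul]
  refine analyticAt_const.fun_mul ((analyticAt_const.fun_mul (c i j)).fun_sub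
    (Finset.analyticAt_fun_sum _ fun k _ => ?_))
  exact (Finset.analyticAt_fun_sum _ fun l _ => (c i l).fun_mul (c k l)).fun_mul (c k j)

lemma loj_fderiv_ret {n : ℕ}
    (f : Matrix (Fin n) (Fin n) ℝ → ℝ)
    (g : Matrix (Fin n) (Fin n) ℝ → Matrix (Fin n) (Fin n) ℝ)
    (hf : AnalyticOnNhd ℝ (fun x : Fin n → Fin n → ℝ => f (Matrix.of x)) Set.univ)
    (hg : IsGradR f g) {Q : Fin n → Fin n → ℝ} (hQ : (Matrix.of Q)ᵀ * (Matrix.of Q) = 1)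
    (H : Fin n → Fin n → ℝ) :
    fderiv ℝ (fun x : Fin n → Fin n → ℝ => f (lojRet (Matrix.of x))) Q H
      = ∑ i, ∑ j, projGradR g (Matrix.of Q) i j * H i j := by
  let ft : (Fin n → Fin n → ℝ) → ℝ := fun x => f (Matrix.of x)
  let ρ : (Fin n → Fin n → ℝ) → (Fin n → Fin n → ℝ) := fun x i j => lojRet (Matrix.of x) i j
  have hρQ : ρ Q = Q := by
    ext i j; simp only [ρ]; rw [lojRet_self hQ]; rfl
  have hfd : HasFDerivAt ft (fderiv ℝ ft Q) Q := (hf Q (mem_univ _)).differentiableAt.hasFDerivAt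
  have hFd : DifferentiableAt ℝ (fun x => ft (ρ x)) Q :=
    (AnalyticAt.fun_comp (hf _ (mem_univ _)) (lojRet_analytic Q)).differentiableAt
  have line : ∀ K : Fin n → Fin n → ℝ, HasDerivAt (fun t : ℝ => Q + t • K) K 0 := by
    intro K
    simpa using ((hasDerivAt_id (0:ℝ)).smul_const K).const_add Q
  -- derivative of ft
  have hft : ∀ K : Fin n → Fin n → ℝ, fderiv ℝ ft Q K = ∑ i, ∑ j, g (Matrix.of Q) i j * K i j := by
    intro K
    have h1 : HasDerivAt (fun t : ℝ => ft (Q + t • K)) (fderiv ℝ ft Q K) 0 := by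
      have := hfd
      rw [show Q = Q + (0:ℝ) • K by simp] at this
      have := this.comp_hasDerivAt (0:ℝ) (line K)
      simpa using! this
    exact h1.unique (hg (Matrix.of Q) (Matrix.of K))
  obtain ⟨R, S, hRS⟩ := lojRet_line hQ (Matrix.of H)
  set T : Fin n → Fin n → ℝ := fun i j => ((1 / 2 : ℝ) • (Matrix.of H - Matrix.of Q * (Matrix.of H)ᵀ
    * Matrix.of Q)) i j with hT
  have hcurve : HasDerivAt (fun t : ℝ => ρ (Q + t • H)) T 0 := by
    have e : (fun t : ℝ => ρ (Q + t • H)) = fun t i j => Q i j + t * T i j + t ^ 2 * R i j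
        + t ^ 3 * S i j := by
      ext t i j
      have := congrFun (congrFun (hRS t) i) j
      exact this
    rw [e, hasDerivAt_pi]
    intro i
    rw [hasDerivAt_pi]
    intro j
    have h := ((((hasDerivAt_id (0:ℝ)).mul_const (T i j)).const_add (Q i j)).add
      (((hasDerivAt_id (0:ℝ)).pow 2).mul_const (R i j))).add
      (((hasDerivAt_id (0:ℝ)).pow 3).mul_const (S i j))
    simpa using! h
  have h2 : HasDerivAt (fun t : ℝ => ft (ρ (Q + t • H))) (fderiv ℝ ft Q T) 0 := by
    have : HasFDerivAt ft (fderiv ℝ ft Q) (ρ (Q + (0:ℝ) • H)) := by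
      simpa [hρQ] using hfd
    exact this.comp_hasDerivAt (0:ℝ) hcurve
  have h3 : HasDerivAt (fun t : ℝ => ft (ρ (Q + t • H))) (fderiv ℝ (fun x => ft (ρ x)) Q H) 0 := by
    have := hFd.hasFDerivAt
    rw [show Q = Q + (0:ℝ) • H by simp] at this
    have := this.comp_hasDerivAt (0:ℝ) (line H)
    simpa using! this
  have h4 := h3.unique h2
  rw [hft] at h4
  have h5 := loj_pair_proj g hQ (Matrix.of H)
  exact h4.trans h5

end LojH

/-- Łojasiewicz inequality for the projected gradient on the orthogonal group:
if `f` is real analytic on `ℝ^{n×n}`, then every `Q ∈ O(n)` admits `δ > 0`, `σ > 0`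
and `ζ ∈ (0, 1/2]` such that `|f(Q') − f(Q)|^{1−ζ} ≤ σ ‖ProjGrad f(Q')‖`
for all orthogonal `Q'` with `‖Q' − Q‖ < δ`. -/
theorem lojasiewicz_projGrad_orthogonal {n : ℕ}
    (f : Matrix (Fin n) (Fin n) ℝ → ℝ)
    (g : Matrix (Fin n) (Fin n) ℝ → Matrix (Fin n) (Fin n) ℝ)
    (hf : AnalyticOnNhd ℝ (fun x : Fin n → Fin n → ℝ => f (Matrix.of x)) Set.univ)
    (hg : IsGradR f g)
    (Q : Matrix (Fin n) (Fin n) ℝ) (hQ : Qᵀ * Q = 1) :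
    ∃ δ > (0 : ℝ), ∃ σ > (0 : ℝ), ∃ ζ : ℝ, ζ ∈ Set.Ioc (0 : ℝ) (1 / 2) ∧
      ∀ Q' : Matrix (Fin n) (Fin n) ℝ, Q'ᵀ * Q' = 1 → frobR (Q' - Q) < δ →
        |f Q' - f Q| ^ (1 - ζ) ≤ σ * frobR (projGradR g Q') := by
  have hF : AnalyticAt ℝ (fun x : Fin n → Fin n → ℝ => f (lojRet (Matrix.of x))) Q :=
    AnalyticAt.fun_comp (g := fun x : Fin n → Fin n → ℝ => f (Matrix.of x))
      (hf _ (Set.mem_univ _)) (lojRet_analytic Q)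
  obtain ⟨k, hk, C, hC, he⟩ := loj_grad hF
  obtain ⟨δ, hδ, hb⟩ := Metric.eventually_nhds_iff.1 he
  have hk' : (2:ℝ) ≤ k := by exact_mod_cast hk
  refine ⟨δ, hδ, C * ((n : ℝ) * n + 1), by positivity, 1 / (k : ℝ), ⟨by positivity, ?_⟩, ?_⟩
  · exact one_div_le_one_div_of_le (by norm_num) hk'
  intro Q' hQ' hlt
  have hdist : dist (α := Fin n → Fin n → ℝ) Q' Q < δ := by
    refine (dist_pi_lt_iff hδ).2 fun i => (dist_pi_lt_iff hδ).2 fun j => ?_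
    rw [Real.dist_eq]
    exact (loj_entry_le_frob (Q' - Q) i j).trans_lt hlt
  have h1 := hb hdist
  have e1 : lojRet (Matrix.of (Q' : Fin n → Fin n → ℝ)) = Q' := lojRet_self hQ'
  have e2 : lojRet (Matrix.of (Q : Fin n → Fin n → ℝ)) = Q := lojRet_self hQ
  rw [e1, e2] at h1
  refine h1.trans ?_
  rw [mul_assoc]
  refine mul_le_mul_of_nonneg_left ?_ hC.le
  have hfn : 0 ≤ frobR (projGradR g Q') := Real.sqrt_nonneg _
  refine ContinuousLinearMap.opNorm_le_bound _ (by positivity) fun H => ?_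
  rw [loj_fderiv_ret f g hf hg (Q := Q') hQ' H, Real.norm_eq_abs]
  calc |∑ i, ∑ j, projGradR g Q' i j * H i j|
      ≤ ∑ i : Fin n, ∑ j : Fin n, frobR (projGradR g Q') * ‖H‖ := by
        refine (Finset.abs_sum_le_sum_abs _ _).trans (Finset.sum_le_sum fun i _ => ?_)
        refine (Finset.abs_sum_le_sum_abs _ _).trans (Finset.sum_le_sum fun j _ => ?_)
        rw [abs_mul]
        refine mul_le_mul (loj_entry_le_frob _ i j) ?_ (abs_nonneg _) hfn
        exact (norm_le_pi_norm (H i) j).trans (norm_le_pi_norm H i)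
    _ = (n : ℝ) * n * (frobR (projGradR g Q') * ‖H‖) := by
        simp; ring
    _ ≤ ((n : ℝ) * n + 1) * frobR (projGradR g Q') * ‖H‖ := by
        have : 0 ≤ frobR (projGradR g Q') * ‖H‖ := by positivity
        nlinarith
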